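/- Let W be an m×k random matrix distributed according to the SUO distribution, let z, z' ∈ ℝ^k satisfy ‖z‖² = ‖z'‖² = k and z ≠ z', and set c = (1/k) zᵀz' (so c ≠ 1). Let (y, y') be a pair of m-dimensional random vectors jointly Gaussian with mean 0 and covariance [[1, c], [c, 1]] ⊗ I_m. Then for n = max(k, m) ≥ 2, the 1st Wasserstein distance satisfies D_Wass((Wz, Wz'), (y, y')) ≤ 4m/(n−1); equivalently, for every 1-Lipschitz function g : ℝ^{2m} → ℝ, |E[g(Wz, Wz')] − E[g(y, y')]| ≤ 4m/(n−1). -/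

import Mathlib

open MeasureTheory ProbabilityTheory Matrix Kronecker
open scoped ENNReal NNReal

noncomputable section

instance {m n : Type*} : MeasurableSpace (Matrix m n ℝ) :=
  show MeasurableSpace (m → n → ℝ) from inferInstance

/-- `μ` is the Haar probability measure on the group `O(n)` of `n × n` real orthogonal
matrices: it is a probability measure, it is supported on orthogonal matrices, and it is
invariant under (left) translation by any orthogonal matrix. -/
def IsHaarO (n : ℕ) (μ : Measure (Matrix (Fin n) (Fin n) ℝ)) : Prop :=
  IsProbabilityMeasure μ ∧
  (∀ᵐ M ∂μ, Mᵀ * M = 1) ∧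
  ∀ Q : Matrix (Fin n) (Fin n) ℝ, Qᵀ * Q = 1 → μ.map (fun M => Q * M) = μ

/-- `μ` is the Haar probability measure on `SO(n)`: a probability measure supported on
orthogonal matrices of determinant one, invariant under left translation by `SO(n)`. -/
def IsHaarSO (n : ℕ) (μ : Measure (Matrix (Fin n) (Fin n) ℝ)) : Prop :=
  IsProbabilityMeasure μ ∧
  (∀ᵐ M ∂μ, Mᵀ * M = 1 ∧ M.det = 1) ∧
  ∀ Q : Matrix (Fin n) (Fin n) ℝ, Qᵀ * Q = 1 → Q.det = 1 →
    μ.map (fun M => Q * M) = μ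

/-- The map taking an `n × n` matrix to `√(n/k)` times its top-left `m × k` submatrix. -/
def suoOfHaar {m k n : ℕ} (hm : m ≤ n) (hk : k ≤ n)
    (M : Matrix (Fin n) (Fin n) ℝ) : Matrix (Fin m) (Fin k) ℝ :=
  Real.sqrt ((n : ℝ) / (k : ℝ)) • M.submatrix (Fin.castLE hm) (Fin.castLE hk)

/-- `ν` is the scaled-corrected uniform orthogonal (SUO) distribution on `m × k` matrices:
the law of `√(n/k) • W₀` where `n = max k m` and `W₀` is the top-left `m × k` submatrix of
a Haar-distributed `n × n` orthogonal matrix. -/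
def IsSUO (m k : ℕ) (ν : Measure (Matrix (Fin m) (Fin k) ℝ)) : Prop :=
  ∃ μ : Measure (Matrix (Fin (max k m)) (Fin (max k m)) ℝ),
    IsHaarO (max k m) μ ∧
    ν = μ.map (suoOfHaar (le_max_right k m) (le_max_left k m))

/-- The kernel function `κ_f(z, z') = (1/m) f(z)ᵀ f(z')` of the combined layer
`f(z) = φ(W z)`, with `φ` applied elementwise. -/
def kernelF {m k : ℕ} (φ : ℝ → ℝ) (W : Matrix (Fin m) (Fin k) ℝ)
    (z z' : Fin k → ℝ) : ℝ :=
  (∑ i, φ (W.mulVec z i) * φ (W.mulVec z' i)) / (m : ℝ)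

/-- The input covariance matrix `Σ_{z,z'} = (1/k) [[zᵀz, zᵀz'], [z'ᵀz, z'ᵀz']]`. -/
def covMat {k : ℕ} (z z' : Fin k → ℝ) : Matrix (Fin 2) (Fin 2) ℝ :=
  (k : ℝ)⁻¹ • !![z ⬝ᵥ z, z ⬝ᵥ z'; z' ⬝ᵥ z, z' ⬝ᵥ z']

/-- The approximate kernel function `κ̃_f(Σ) = E_{u ∼ N(0, Σ)}[φ(u₁) φ(u₂)]`, realized by
pushing a pair of independent standard Gaussians through the Cholesky factor of `Σ`. -/
def approxKernel (φ : ℝ → ℝ) (S : Matrix (Fin 2) (Fin 2) ℝ) : ℝ :=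
  ∫ p : ℝ × ℝ,
      φ (Real.sqrt (S 0 0) * p.1) *
      φ ((S 1 0 / Real.sqrt (S 0 0)) * p.1 +
          Real.sqrt (S 1 1 - (S 1 0) ^ 2 / S 0 0) * p.2)
    ∂((gaussianReal 0 1).prod (gaussianReal 0 1))

/-- `γ` is the law of a centered (jointly) Gaussian random vector indexed by `ι` with
covariance matrix `A`: every linear functional of it is a centered real Gaussian with the
corresponding variance. -/
def IsGaussianLaw {ι : Type*} [Fintype ι] (A : Matrix ι ι ℝ)
    (γ : Measure (ι → ℝ)) : Prop :=
  IsProbabilityMeasure γ ∧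
  ∀ l : ι → ℝ,
    γ.map (fun y => ∑ i, l i * y i) =
      gaussianReal 0 (Real.toNNReal (∑ i, ∑ j, l i * A i j * l j))

/-- The Frobenius (Hilbert–Schmidt) norm of a matrix. -/
def frobNorm {m n : ℕ} (M : Matrix (Fin m) (Fin n) ℝ) : ℝ :=
  Real.sqrt (∑ i, ∑ j, (M i j) ^ 2)

/-- The `ℓ²` operator norm of a square matrix. -/
def opNorm {d : ℕ} (A : Matrix (Fin d) (Fin d) ℝ) : ℝ :=
  ‖Matrix.toEuclideanCLM (𝕜 := ℝ) A‖

end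

noncomputable abbrev Gam (ι : Type) [Fintype ι] : Measure (ι → ℝ) := Measure.pi (fun _ : ι => gaussianReal 0 1)

lemma hasDerivAt_pdf (x : ℝ) :
    HasDerivAt (gaussianPDFReal 0 1) (-x * gaussianPDFReal 0 1 x) x := by
  unfold gaussianPDFReal
  have h : HasDerivAt (fun x : ℝ => -(x - 0) ^ 2 / (2 * ((1 : ℝ≥0) : ℝ))) (-x) x := by
    have := ((((hasDerivAt_id x).sub_const 0).pow 2).neg).div_const (2 * ((1 : ℝ≥0) : ℝ))
    refine this.congr_deriv ?_
    simp; ring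
  refine ((h.exp).const_mul _).congr_deriv ?_
  ring

lemma integrable_gauss_id : Integrable (fun x : ℝ => x) (gaussianReal 0 1) := by
  have := memLp_id_gaussianReal (μ := 0) (v := 1) 1
  have h : MemLp (id : ℝ → ℝ) 1 (gaussianReal 0 1) := by simpa using this
  exact memLp_one_iff_integrable.1 h

lemma integrable_gauss_sq : Integrable (fun x : ℝ => x ^ 2) (gaussianReal 0 1) := by
  have := memLp_id_gaussianReal (μ := 0) (v := 1) 2
  have h : MemLp (id : ℝ → ℝ) 2 (gaussianReal 0 1) := by simpa using this
  exact h.integrable_sq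

lemma integral_gauss_sq : ∫ x : ℝ, x ^ 2 ∂(gaussianReal 0 1) = 1 := by
  have h := variance_id_gaussianReal (μ := 0) (v := 1)
  rw [variance_of_integral_eq_zero (by fun_prop) (by simp)] at h
  simpa using h

lemma integrable_gauss_iff (f : ℝ → ℝ) :
    Integrable f (gaussianReal 0 1) ↔ Integrable (fun x => gaussianPDFReal 0 1 x * f x) := by
  rw [gaussianReal_of_var_ne_zero _ one_ne_zero]
  have : gaussianPDF 0 1 = fun x => ENNReal.ofReal (gaussianPDFReal 0 1 x) := rfl
  rw [this, integrable_withDensity_iff_integrable_smul' (by fun_prop) (by simp)]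
  refine integrable_congr (Filter.Eventually.of_forall fun x => ?_)
  simp [ENNReal.toReal_ofReal (gaussianPDFReal_nonneg 0 1 x)]

lemma stein_one (f f' : ℝ → ℝ) (hf : ∀ x, HasDerivAt f (f' x) x) (hc : Continuous f') (C : ℝ)
    (h1 : ∀ x, |f x| ≤ C) (h2 : ∀ x, |f' x| ≤ C) :
    ∫ x, x * f x ∂(gaussianReal 0 1) = ∫ x, f' x ∂(gaussianReal 0 1) := by
  have hfc : Continuous f := continuous_iff_continuousAt.2 fun x => (hf x).continuousAt
  have i1 : Integrable f (gaussianReal 0 1) :=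
    Integrable.of_bound hfc.aestronglyMeasurable C (Filter.Eventually.of_forall h1)
  have i2 : Integrable f' (gaussianReal 0 1) :=
    Integrable.of_bound hc.aestronglyMeasurable C (Filter.Eventually.of_forall h2)
  have i3 : Integrable (fun x => x * f x) (gaussianReal 0 1) :=
    integrable_gauss_id.mul_bdd (c := C) hfc.aestronglyMeasurable (Filter.Eventually.of_forall h1)
  rw [integral_gaussianReal_eq_integral_smul one_ne_zero,
    integral_gaussianReal_eq_integral_smul one_ne_zero]
  rw [integrable_gauss_iff] at i1 i2 i3
  have := integral_mul_deriv_eq_deriv_mul_of_integrable (u := gaussianPDFReal 0 1) (v := f)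
    (u' := fun x => -x * gaussianPDFReal 0 1 x) (v' := f') (fun x _ => hasDerivAt_pdf x)
    (fun x _ => hf x) i2 (by
      refine i3.neg.congr (Filter.Eventually.of_forall fun x => ?_)
      simp; ring) i1
  simp only [smul_eq_mul]
  rw [this, ← integral_neg]
  congr 1; ext x; ring

lemma gam_resample {ι : Type} [Fintype ι] [DecidableEq ι] (q : ι) :
    MeasurePreserving (fun w : (ι → ℝ) × ℝ => Function.update w.1 q w.2)
      ((Gam ι).prod (gaussianReal 0 1)) (Gam ι) := by
  have hm : Measurable (fun w : (ι → ℝ) × ℝ => Function.update w.1 q w.2) := by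
    refine measurable_pi_lambda _ fun i => ?_
    by_cases h : i = q
    · subst h; simpa using measurable_snd
    · simp only [Function.update_of_ne h]; fun_prop
  refine ⟨hm, ?_⟩
  symm
  refine Measure.pi_eq fun s hs => ?_
  rw [Measure.map_apply hm (MeasurableSet.univ_pi hs)]
  have : (fun w : (ι → ℝ) × ℝ => Function.update w.1 q w.2) ⁻¹' (Set.univ.pi s)
      = (Set.univ.pi (Function.update s q Set.univ)) ×ˢ (s q) := by
    ext w
    simp only [Set.mem_preimage, Set.mem_pi, Set.mem_univ, forall_true_left, Set.mem_prod]
    constructor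
    · intro h
      refine ⟨fun i => ?_, by simpa using h q⟩
      by_cases hi : i = q
      · subst hi; simp
      · simpa [Function.update_of_ne hi] using h i
    · rintro ⟨h, h'⟩ i
      by_cases hi : i = q
      · subst hi; simpa using h'
      · simpa [Function.update_of_ne hi] using h i
  rw [this, Measure.prod_prod, Measure.pi_pi]
  rw [← Finset.mul_prod_erase _ _ (Finset.mem_univ q),
    ← Finset.mul_prod_erase _ (fun i => gaussianReal 0 1 (s i)) (Finset.mem_univ q)]
  simp only [Function.update_self, measure_univ, one_mul]
  rw [mul_comm]
  congr 1
  refine Finset.prod_congr rfl fun i hi => ?_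
  rw [Function.update_of_ne (Finset.ne_of_mem_erase hi)]

lemma integral_gam_resample {ι : Type} [Fintype ι] [DecidableEq ι] (q : ι) (F : (ι → ℝ) → ℝ)
    (hF : Integrable F (Gam ι)) :
    ∫ z, F z ∂(Gam ι) = ∫ z, ∫ t, F (Function.update z q t) ∂(gaussianReal 0 1) ∂(Gam ι) := by
  have hp := gam_resample q
  rw [← integral_prod (fun w : (ι → ℝ) × ℝ => F (Function.update w.1 q w.2))
    (hp.integrable_comp_of_integrable hF)]
  have := hp.map_eq
  conv_lhs => rw [← this]
  rw [integral_map hp.measurable.aemeasurable (by rw [this]; exact hF.aestronglyMeasurable)]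

lemma integrable_gam_eval {ι : Type} [Fintype ι] (q : ι) :
    Integrable (fun z : ι → ℝ => z q) (Gam ι) :=
  (measurePreserving_eval (fun _ : ι => gaussianReal 0 1) q).integrable_comp_of_integrable
    integrable_gauss_id

lemma integrable_gam_sq {ι : Type} [Fintype ι] (q : ι) :
    Integrable (fun z : ι → ℝ => z q ^ 2) (Gam ι) :=
  (measurePreserving_eval (fun _ : ι => gaussianReal 0 1) q).integrable_comp_of_integrable
    integrable_gauss_sq

lemma integrable_gam_mul {ι : Type} [Fintype ι] (q r : ι) :
    Integrable (fun z : ι → ℝ => z q * z r) (Gam ι) := by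
  refine ((integrable_gam_sq q).add (integrable_gam_sq r)).mono' (by fun_prop)
    (Filter.Eventually.of_forall fun z => ?_)
  simp only [Real.norm_eq_abs, Pi.add_apply, abs_le]
  constructor <;> nlinarith [sq_nonneg (z q + z r), sq_nonneg (z q - z r), sq_nonneg (z q), sq_nonneg (z r)]

lemma integral_gam_mul {ι : Type} [Fintype ι] [DecidableEq ι] (q r : ι) :
    ∫ z : ι → ℝ, z q * z r ∂(Gam ι) = if q = r then 1 else 0 := by
  rw [integral_gam_resample q _ (integrable_gam_mul q r)]
  split_ifs with h
  · subst h
    simp [← pow_two, integral_gauss_sq]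
  · simp [Function.update_of_ne (Ne.symm h), integral_mul_const]

lemma stein_gam {ι : Type} [Fintype ι] [DecidableEq ι] (q : ι) (φ : (ι → ℝ) → ℝ)
    (hφ : ContDiff ℝ 1 φ) (C : ℝ)
    (h1 : ∀ z, |φ z| ≤ C) (h2 : ∀ z, |fderiv ℝ φ z (Pi.single q 1)| ≤ C) :
    ∫ z, z q * φ z ∂(Gam ι) = ∫ z, fderiv ℝ φ z (Pi.single q 1) ∂(Gam ι) := by
  have hc : Continuous (fun z => fderiv ℝ φ z (Pi.single q 1)) :=
    (hφ.continuous_fderiv (by norm_num)).clm_apply continuous_const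
  rw [integral_gam_resample q _ ((integrable_gam_eval q).mul_bdd (c := C)
    hφ.continuous.aestronglyMeasurable (Filter.Eventually.of_forall h1)),
    integral_gam_resample q _ (Integrable.of_bound hc.aestronglyMeasurable C
      (Filter.Eventually.of_forall h2))]
  congr 1; ext z
  simp only [Function.update_self]
  have hu : Continuous (fun t => Function.update z q t) := by fun_prop
  refine stein_one _ _ (fun t => ?_) (hc.comp hu) C (fun t => h1 _) (fun t => h2 _)
  exact ((hφ.differentiable (by norm_num)) _).hasFDerivAt.comp_hasDerivAt t (hasDerivAt_update z q t)

def linMap {m : ℕ} (c s : ℝ) (z : Fin 2 × Fin m → ℝ) : Fin 2 × Fin m → ℝ :=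
  fun p => if p.1 = 0 then z (0, p.2) else c * z (0, p.2) + s * z (1, p.2)

lemma continuous_linMap {m : ℕ} (c s : ℝ) : Continuous (linMap (m := m) c s) := by
  unfold linMap
  refine continuous_pi fun p => ?_
  split_ifs <;> fun_prop

lemma gam_map_linear {ι : Type} [Fintype ι] (a : ι → ℝ) :
    (Gam ι).map (fun z => ∑ i, a i * z i) = gaussianReal 0 (Real.toNNReal (∑ i, a i ^ 2)) := by
  have hm : Measurable (fun z : ι → ℝ => ∑ i, a i * z i) := by fun_prop
  haveI : IsProbabilityMeasure ((Gam ι).map (fun z => ∑ i, a i * z i)) :=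
    Measure.isProbabilityMeasure_map hm.aemeasurable
  refine Measure.ext_of_charFun ?_
  ext t
  rw [charFun_apply_real, integral_map hm.aemeasurable (by fun_prop), charFun_gaussianReal]
  have : ∀ z : ι → ℝ, Complex.exp (t * ((∑ i, a i * z i : ℝ) : ℂ) * Complex.I)
      = ∏ i, (fun i (x : ℝ) => Complex.exp (((t * a i : ℝ) : ℂ) * x * Complex.I)) i (z i) := by
    intro z
    rw [← Complex.exp_sum]
    congr 1
    push_cast
    rw [Finset.mul_sum, Finset.sum_mul]
    refine Finset.sum_congr rfl fun i _ => by ring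
  simp_rw [this]
  rw [integral_fintype_prod_eq_prod (f := fun i (x : ℝ) => Complex.exp (((t * a i : ℝ) : ℂ) * x * Complex.I))]
  simp_rw [← charFun_apply_real, charFun_gaussianReal]
  rw [← Complex.exp_sum]
  congr 1
  rw [Real.coe_toNNReal _ (Finset.sum_nonneg fun i _ => sq_nonneg _)]
  push_cast
  simp only [mul_zero, zero_mul, zero_sub, one_mul]
  rw [Finset.sum_neg_distrib, Finset.sum_mul, Finset.sum_div]
  congr 1
  refine Finset.sum_congr rfl fun i _ => by ring

lemma gaussianLaw_eq {m : ℕ} (c s : ℝ) (hs : s ^ 2 = 1 - c ^ 2) (γ : Measure (Fin 2 × Fin m → ℝ))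
    (hγ : IsGaussianLaw (!![1, c; c, 1] ⊗ₖ (1 : Matrix (Fin m) (Fin m) ℝ)) γ) :
    γ = (Gam (Fin 2 × Fin m)).map (linMap c s) := by
  obtain ⟨hp, hl⟩ := hγ
  have hL := continuous_linMap (m := m) c s
  haveI : IsProbabilityMeasure ((Gam (Fin 2 × Fin m)).map (linMap c s)) :=
    Measure.isProbabilityMeasure_map hL.measurable.aemeasurable
  refine Measure.ext_of_charFunDual ?_
  ext l
  rw [charFunDual_eq_charFun_map_one, charFunDual_eq_charFun_map_one]
  have hrep : ∀ y : Fin 2 × Fin m → ℝ, l y = ∑ i, l (Pi.single i 1) * y i := by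
    intro y
    conv_lhs => rw [pi_eq_sum_univ' y]
    simp only [map_sum, map_smul, smul_eq_mul, mul_comm]
  set b : Fin 2 × Fin m → ℝ := fun i => l (Pi.single i 1) with hb
  have h1 : γ.map l = gaussianReal 0 (Real.toNNReal (∑ i, (b (0, i) ^ 2 + 2 * c * b (0,i) * b (1, i) + b (1,i)^2))) := by
    have : (l : (Fin 2 × Fin m → ℝ) → ℝ) = fun y => ∑ i, b i * y i := by
      ext y; exact hrep y
    rw [this, hl b]
    congr 2
    simp [Fintype.sum_prod_type, Matrix.one_apply, Finset.sum_add_distrib, mul_ite, ite_mul]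
    simp only [← Finset.sum_add_distrib]
    refine Finset.sum_congr rfl fun i _ => by ring
  have h2 : ((Gam (Fin 2 × Fin m)).map (linMap c s)).map l = gaussianReal 0 (Real.toNNReal (∑ i, (b (0, i) ^ 2 + 2 * c * b (0,i) * b (1, i) + b (1,i)^2))) := by
    rw [Measure.map_map l.continuous.measurable hL.measurable]
    set a : Fin 2 × Fin m → ℝ := fun p => if p.1 = 0 then b (0, p.2) + c * b (1, p.2) else s * b (1, p.2) with ha
    have : (l : (Fin 2 × Fin m → ℝ) → ℝ) ∘ linMap c s = fun z => ∑ i, a i * z i := by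
      ext z
      rw [Function.comp_apply, hrep]
      simp only [Fintype.sum_prod_type, Fin.sum_univ_two, linMap, ha]
      simp only [← Finset.sum_add_distrib]
      refine Finset.sum_congr rfl fun i _ => ?_
      simp [hb]
      ring
    rw [this, gam_map_linear]
    congr 2
    simp only [Fintype.sum_prod_type, Fin.sum_univ_two, ha]
    simp only [← Finset.sum_add_distrib]
    refine Finset.sum_congr rfl fun i _ => ?_
    simp
    rw [mul_pow, hs]
    ring
  rw [h1, h2]

lemma eucl_le_sup {ι : Type} [Fintype ι] (v : ι → ℝ) :
    Real.sqrt (∑ p, (v p) ^ 2) ≤ Real.sqrt (Fintype.card ι) * ‖v‖ := by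
  rw [← Real.sqrt_sq (norm_nonneg v), ← Real.sqrt_mul (by positivity)]
  refine Real.sqrt_le_sqrt ?_
  calc ∑ p, (v p) ^ 2 ≤ ∑ _p : ι, ‖v‖ ^ 2 := by
        refine Finset.sum_le_sum fun p _ => ?_
        rw [← sq_abs]
        exact pow_le_pow_left₀ (abs_nonneg _) (norm_le_pi_norm v p) 2
    _ = _ := by simp

lemma lip_of_eucl {ι : Type} [Fintype ι] (f : (ι → ℝ) → ℝ) (L : ℝ) (hL : 0 ≤ L)
    (hf : ∀ x y : ι → ℝ, |f x - f y| ≤ L * Real.sqrt (∑ p, (x p - y p) ^ 2)) :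
    LipschitzWith (Real.toNNReal (L * Real.sqrt (Fintype.card ι))) f := by
  refine LipschitzWith.of_dist_le_mul fun x y => ?_
  rw [Real.coe_toNNReal _ (by positivity), Real.dist_eq, dist_eq_norm, mul_assoc]
  exact (hf x y).trans (mul_le_mul_of_nonneg_left (eucl_le_sup (x - y)) hL)

lemma conv_lip {ι : Type} [Fintype ι] (f : (ι → ℝ) → ℝ) (L : ℝ) (hL : 0 ≤ L)
    (hf : ∀ x y : ι → ℝ, |f x - f y| ≤ L * Real.sqrt (∑ p, (x p - y p) ^ 2))
    (ψ : (ι → ℝ) → ℝ) (hψ : Continuous ψ) (hs : HasCompactSupport ψ) (x y : ι → ℝ) :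
    |(∫ t, ψ t * f (x - t)) - ∫ t, ψ t * f (y - t)| ≤
      (∫ t, |ψ t|) * (L * Real.sqrt (∑ p, (x p - y p) ^ 2)) := by
  have hfc : Continuous f := (lip_of_eucl f L hL hf).continuous
  have hi : ∀ x, Integrable (fun t => ψ t * f (x - t)) := fun x =>
    Continuous.integrable_of_hasCompactSupport (by fun_prop) hs.mul_right
  have hi' : Integrable ψ := hψ.integrable_of_hasCompactSupport hs
  rw [← integral_sub (hi x) (hi y), ← integral_mul_const]
  refine (abs_integral_le_integral_abs).trans (integral_mono ((hi x).sub (hi y)).abs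
    (hi'.abs.mul_const _) fun t => ?_)
  beta_reduce
  rw [← mul_sub, abs_mul]
  refine mul_le_mul_of_nonneg_left ?_ (abs_nonneg _)
  simpa using hf (x - t) (y - t)

lemma mollify {ι : Type} [Fintype ι] [DecidableEq ι] (f : (ι → ℝ) → ℝ) (L : ℝ) (hL : 0 ≤ L)
    (hf : ∀ x y : ι → ℝ, |f x - f y| ≤ L * Real.sqrt (∑ p, (x p - y p) ^ 2)) (ε : ℝ) (hε : 0 < ε) :
    ∃ F : (ι → ℝ) → ℝ, ContDiff ℝ 2 F ∧
      (∀ x y : ι → ℝ, |F x - F y| ≤ L * Real.sqrt (∑ p, (x p - y p) ^ 2)) ∧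
      (∀ x, |F x - f x| ≤ ε) ∧
      ∃ C : ℝ, ∀ p q x, |fderiv ℝ (fun y => fderiv ℝ F y (Pi.single p 1)) x (Pi.single q 1)| ≤ C := by
  have hlip := lip_of_eucl f L hL hf
  have hfc : Continuous f := hlip.continuous
  set K := L * Real.sqrt (Fintype.card ι) with hK
  have hK0 : 0 ≤ K := by positivity
  set φ : ContDiffBump (0 : ι → ℝ) := ⟨ε / (2 * (K + 1)), ε / (K + 1), by positivity, by
    apply div_lt_div_of_pos_left hε (by positivity); linarith⟩ with hφ
  set ψ := φ.normed volume with hψ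
  have hψc : ContDiff ℝ 2 ψ := φ.contDiff_normed
  have hψs : HasCompactSupport ψ := φ.hasCompactSupport_normed
  set F := convolution ψ f (ContinuousLinearMap.lsmul ℝ ℝ) volume with hF
  have hFe : ∀ x, F x = ∫ t, ψ t * f (x - t) := fun x => by
    simp [hF, convolution]
  have hloc : LocallyIntegrable f volume := hfc.locallyIntegrable
  have hC2 : ContDiff ℝ 2 F := hψs.contDiff_convolution_left (n := 2) _ hψc hloc
  have hD : ∀ p x, fderiv ℝ F x (Pi.single p 1) = ∫ t, (fderiv ℝ ψ t (Pi.single p 1)) * f (x - t) := by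
    intro p x
    rw [(hψs.hasFDerivAt_convolution_left (ContinuousLinearMap.lsmul ℝ ℝ)
      (hψc.of_le (by norm_num)) hloc x).fderiv]
    have hcf : Continuous (fderiv ℝ ψ) := hψc.continuous_fderiv (by norm_num)
    rw [convolution, ContinuousLinearMap.integral_apply]
    · simp [ContinuousLinearMap.precompL_apply]
    · refine Continuous.integrable_of_hasCompactSupport ?_ ?_
      · fun_prop
      · refine (hψs.fderiv ℝ).mono fun t ht => ?_
        contrapose! ht
        simp only [Function.mem_support, ne_eq, not_not] at ht ⊢
        rw [ht]; simp
  refine ⟨F, hC2, ?_, ?_, ?_⟩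
  · intro x y
    rw [hFe, hFe]
    have := conv_lip f L hL hf ψ hψc.continuous hψs x y
    have h1 : ∫ t, |ψ t| = 1 := by
      rw [← φ.integral_normed (μ := volume)]
      congr 1; ext t
      exact abs_of_nonneg (φ.nonneg_normed t)
    rwa [h1, one_mul] at this
  · intro x
    rw [← Real.dist_eq]
    refine φ.dist_normed_convolution_le hfc.aestronglyMeasurable fun y hy => ?_
    have h1 := hlip.dist_le_mul y x
    rw [Real.coe_toNNReal _ hK0] at h1
    rw [Metric.mem_ball] at hy
    have h2 : φ.rOut = ε / (K + 1) := rfl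
    rw [h2] at hy
    calc dist (f y) (f x) ≤ K * dist y x := h1
      _ ≤ K * (ε / (K + 1)) := by gcongr
      _ ≤ ε := by
        rw [mul_div_assoc', div_le_iff₀ (by positivity)]; nlinarith
  · set c : ι → ℝ := fun p => (∫ t, |fderiv ℝ ψ t (Pi.single p 1)|) with hc
    have hc0 : ∀ p, 0 ≤ c p := fun p => integral_nonneg fun t => abs_nonneg _
    refine ⟨∑ p, c p * L * Real.sqrt (Fintype.card ι), fun p q x => ?_⟩
    have h1 : LipschitzWith (Real.toNNReal (c p * L * Real.sqrt (Fintype.card ι)))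
        (fun y => fderiv ℝ F y (Pi.single p 1)) := by
      refine lip_of_eucl _ _ (mul_nonneg (hc0 p) hL) fun y y' => ?_
      rw [hD, hD, mul_assoc]
      refine conv_lip f L hL hf _ ?_ ?_ y y'
      · exact (hψc.continuous_fderiv (by norm_num)).clm_apply continuous_const
      · exact hψs.fderiv_apply ℝ _
    have h2 := norm_fderiv_le_of_lipschitz ℝ h1 (x₀ := x)
    rw [Real.coe_toNNReal _ (by have := hc0 p; positivity)] at h2
    have h3 := (fderiv ℝ (fun y => fderiv ℝ F y (Pi.single p 1)) x).le_opNorm (Pi.single q 1)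
    have h4 : ‖(Pi.single q 1 : ι → ℝ)‖ = 1 := by simp [Pi.norm_single]
    rw [h4, mul_one] at h3
    refine (h3.trans h2).trans ?_
    exact Finset.single_le_sum (f := fun p => c p * L * Real.sqrt (Fintype.card ι))
      (fun i _ => by have := hc0 i; positivity) (Finset.mem_univ p)

lemma exists_bound_ball {ι : Type} [Fintype ι] (f : (ι → ℝ) → ℝ) (hf : Continuous f) (R : ℝ) :
    ∃ C, ∀ v, ‖v‖ ≤ R → |f v| ≤ C := by
  obtain ⟨C, hC⟩ := (isCompact_closedBall (0 : ι → ℝ) R).exists_bound_of_continuousOn hf.continuousOn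
  exact ⟨C, fun v hv => hC v (by simpa using hv)⟩

lemma integrable_of_ae_ball {ι : Type} [Fintype ι] (π : Measure (ι → ℝ)) [IsProbabilityMeasure π]
    (R : ℝ) (hR : ∀ᵐ v ∂π, ‖v‖ ≤ R) (f : (ι → ℝ) → ℝ) (hf : Continuous f) : Integrable f π := by
  obtain ⟨C, hC⟩ := exists_bound_ball f hf R
  exact Integrable.of_bound hf.aestronglyMeasurable C (hR.mono hC)

noncomputable def rotv {n : ℕ} (r t : Fin n) (ε : ℝ) (v : Fin 2 × Fin n → ℝ) : Fin 2 × Fin n → ℝ :=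
  fun p => if p.2 = r then Real.cos ε * v (p.1, r) + Real.sin ε * v (p.1, t)
    else if p.2 = t then Real.cos ε * v (p.1, t) - Real.sin ε * v (p.1, r) else v p

def Jv {n : ℕ} (r t : Fin n) (v : Fin 2 × Fin n → ℝ) : Fin 2 × Fin n → ℝ :=
  fun p => if p.2 = r then v (p.1, t) else if p.2 = t then - v (p.1, r) else 0

lemma continuous_Jv {n : ℕ} (r t : Fin n) : Continuous (Jv r t) := by
  unfold Jv
  refine continuous_pi fun p => ?_
  split_ifs <;> fun_prop

lemma continuous_rotv {n : ℕ} (r t : Fin n) (ε : ℝ) : Continuous (rotv r t ε) := by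
  unfold rotv
  refine continuous_pi fun p => ?_
  split_ifs <;> fun_prop

lemma hasDerivAt_rotv {n : ℕ} (r t : Fin n) (h : r ≠ t) (v : Fin 2 × Fin n → ℝ) (ε : ℝ) :
    HasDerivAt (fun ε => rotv r t ε v) (Jv r t (rotv r t ε v)) ε := by
  rw [hasDerivAt_pi]
  intro p
  unfold rotv Jv
  by_cases h1 : p.2 = r
  · simp only [h1, if_true, h.symm, if_false]
    refine (((Real.hasDerivAt_cos ε).mul_const _).add ((Real.hasDerivAt_sin ε).mul_const _)).congr_deriv ?_
    ring
  · by_cases h2 : p.2 = t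
    · simp only [h2, if_true, h.symm, if_false]
      refine (((Real.hasDerivAt_cos ε).mul_const _).sub ((Real.hasDerivAt_sin ε).mul_const _)).congr_deriv ?_
      ring
    · simp only [h1, h2, if_false]
      exact hasDerivAt_const _ _

lemma norm_rotv_le {n : ℕ} (r t : Fin n) (v : Fin 2 × Fin n → ℝ) (ε : ℝ) :
    ‖rotv r t ε v‖ ≤ 2 * ‖v‖ := by
  rw [pi_norm_le_iff_of_nonneg (by positivity)]
  intro p
  have h : ∀ p, |v p| ≤ ‖v‖ := fun p => norm_le_pi_norm v p
  have hc : ∀ p, |Real.cos ε * v p| ≤ ‖v‖ := fun p => by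
    rw [abs_mul]
    exact (mul_le_of_le_one_left (abs_nonneg _) (Real.abs_cos_le_one ε)).trans (h p)
  have hs : ∀ p, |Real.sin ε * v p| ≤ ‖v‖ := fun p => by
    rw [abs_mul]
    exact (mul_le_of_le_one_left (abs_nonneg _) (Real.abs_sin_le_one ε)).trans (h p)
  unfold rotv
  rw [Real.norm_eq_abs]
  split_ifs
  · exact (abs_add_le _ _).trans (by linarith [hc (p.1, r), hs (p.1, t)])
  · exact (abs_sub _ _).trans (by linarith [hc (p.1, t), hs (p.1, r)])
  · linarith [h p, norm_nonneg v]

lemma rotv_zero {n : ℕ} (r t : Fin n) (v : Fin 2 × Fin n → ℝ) : rotv r t 0 v = v := by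
  ext ⟨a, j⟩
  simp only [rotv, Real.cos_zero, Real.sin_zero]
  split_ifs with h1 h2
  · simp [h1]
  · simp [h2]
  · rfl

lemma rot_ibp {n : ℕ} (π : Measure (Fin 2 × Fin n → ℝ)) [IsProbabilityMeasure π]
    (R : ℝ) (hR : ∀ᵐ v ∂π, ‖v‖ ≤ R) (r t : Fin n) (hrt : r ≠ t)
    (hinv : ∀ ε, π.map (rotv r t ε) = π)
    (ψ : (Fin 2 × Fin n → ℝ) → ℝ) (hψ : ContDiff ℝ 1 ψ) :
    ∫ v, fderiv ℝ ψ v (Jv r t v) ∂π = 0 := by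
  have hc : Continuous (fun v => fderiv ℝ ψ v (Jv r t v)) :=
    (hψ.continuous_fderiv (by norm_num)).clm_apply (continuous_Jv r t)
  obtain ⟨C, hC⟩ := exists_bound_ball _ hc (2 * R)
  have hd := hasDerivAt_integral_of_dominated_loc_of_deriv_le (μ := π) (x₀ := (0 : ℝ)) (s := Set.univ)
    (F := fun ε v => ψ (rotv r t ε v)) (F' := fun ε v => fderiv ℝ ψ (rotv r t ε v) (Jv r t (rotv r t ε v)))
    (bound := fun _ => C) Filter.univ_mem
    (Filter.Eventually.of_forall fun ε => (hψ.continuous.comp (continuous_rotv r t ε)).aestronglyMeasurable)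
    (integrable_of_ae_ball π R hR _ (hψ.continuous.comp (continuous_rotv r t 0)))
    ((hc.comp (continuous_rotv r t 0)).aestronglyMeasurable)
    (by
      filter_upwards [hR] with v hv ε _
      exact hC _ ((norm_rotv_le r t v ε).trans (by linarith)))
    (integrable_const _)
    (Filter.Eventually.of_forall fun v ε _ =>
      ((hψ.differentiable (by norm_num)) _).hasFDerivAt.comp_hasDerivAt ε (hasDerivAt_rotv r t hrt v ε))
  have hconst : (fun ε => ∫ v, ψ (rotv r t ε v) ∂π) = fun _ => ∫ v, ψ v ∂π := by
    ext ε
    conv_rhs => rw [← hinv ε]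
    rw [integral_map (continuous_rotv r t ε).measurable.aemeasurable hψ.continuous.aestronglyMeasurable]
  have h1 := hd.2
  rw [hconst] at h1
  have h2 := h1.unique (hasDerivAt_const _ _)
  simpa only [rotv_zero] using h2

lemma fderiv_pi_sum {ι : Type} [Fintype ι] [DecidableEq ι] (l : (ι → ℝ) →L[ℝ] ℝ) (y : ι → ℝ) :
    l y = ∑ i, l (Pi.single i 1) * y i := by
  conv_lhs => rw [pi_eq_sum_univ' y]
  simp only [map_sum, map_smul, smul_eq_mul, mul_comm]

def res {m n : ℕ} (e : Fin m → Fin n) : (Fin 2 × Fin n → ℝ) →L[ℝ] (Fin 2 × Fin m → ℝ) :=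
  ContinuousLinearMap.pi fun p => ContinuousLinearMap.proj (p.1, e p.2)

@[simp] lemma res_apply {m n : ℕ} (e : Fin m → Fin n) (v : Fin 2 × Fin n → ℝ) (p : Fin 2 × Fin m) :
    res e v p = v (p.1, e p.2) := rfl

def Tm {m : ℕ} (x : Fin 2 × Fin m → ℝ) (p q : Fin 2 × Fin m) : ℝ := x (p.1, q.2) * x (q.1, p.2)

lemma sum_J {m n : ℕ} (e : Fin m → Fin n) (he : Function.Injective e) (v : Fin 2 × Fin n → ℝ)
    (hv : ∀ a b, ∑ j, v (a, j) * v (b, j) = if a = b then (n : ℝ) else 0) (p q : Fin 2 × Fin m) :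
    ∑ t ∈ Finset.univ.erase (e p.2), v (p.1, t) * Jv (e p.2) t v (q.1, e q.2)
      = (if p = q then (n : ℝ) else 0) - Tm (res e v) p q := by
  obtain ⟨a, i⟩ := p
  obtain ⟨b, j⟩ := q
  simp only [Tm, res_apply, Jv]
  by_cases h : j = i
  · subst h
    simp only [if_true]
    rw [Finset.sum_erase_eq_sub (Finset.mem_univ _), hv]
    simp
  · have h' : e j ≠ e i := fun hh => h (he hh)
    simp only [h', if_false]
    rw [Finset.sum_eq_single (e j)]
    · simp [Ne.symm h]
    · intro t _ ht
      simp [Ne.symm ht]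
    · intro hh
      exact absurd (Finset.mem_erase.2 ⟨h', Finset.mem_univ _⟩) hh

lemma stein_frame {m n : ℕ} (e : Fin m → Fin n) (he : Function.Injective e)
    (π : Measure (Fin 2 × Fin n → ℝ)) [IsProbabilityMeasure π]
    (R : ℝ) (hR : ∀ᵐ v ∂π, ‖v‖ ≤ R)
    (hπ : ∀ᵐ v ∂π, ∀ a b, ∑ j, v (a, j) * v (b, j) = if a = b then (n : ℝ) else 0)
    (hinv : ∀ r t : Fin n, r ≠ t → ∀ ε, π.map (rotv r t ε) = π)
    (p : Fin 2 × Fin m) (φ : (Fin 2 × Fin m → ℝ) → ℝ) (hφ : ContDiff ℝ 1 φ) :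
    ((n : ℝ) - 1) * ∫ v, res e v p * φ (res e v) ∂π =
      ∫ v, ∑ q, ((if p = q then (n : ℝ) else 0) - Tm (res e v) p q) *
        fderiv ℝ φ (res e v) (Pi.single q 1) ∂π := by
  set r := e p.2 with hr
  have hdφ : ∀ q, Continuous (fun v => fderiv ℝ φ (res e v) (Pi.single q 1)) := fun q =>
    ((hφ.continuous_fderiv (by norm_num)).comp (res e).continuous).clm_apply continuous_const
  have hψ : ∀ t : Fin n, ContDiff ℝ 1 (fun v : Fin 2 × Fin n → ℝ => v (p.1, t) * φ (res e v)) := by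
    intro t
    exact (contDiff_apply ℝ ℝ (p.1, t)).mul (hφ.comp (res e).contDiff)
  have hder : ∀ t : Fin n, t ≠ r → ∀ v, fderiv ℝ (fun v : Fin 2 × Fin n → ℝ => v (p.1, t) * φ (res e v)) v (Jv r t v)
      = - (res e v p * φ (res e v)) + ∑ q, (v (p.1, t) * Jv r t v (q.1, e q.2)) * fderiv ℝ φ (res e v) (Pi.single q 1) := by
    intro t ht v
    have h1 : HasFDerivAt (fun v : Fin 2 × Fin n → ℝ => v (p.1, t))
      (ContinuousLinearMap.proj (R := ℝ) (φ := fun _ : Fin 2 × Fin n => ℝ) (p.1, t)) v :=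
      (ContinuousLinearMap.proj (R := ℝ) (φ := fun _ : Fin 2 × Fin n => ℝ) (p.1, t)).hasFDerivAt
    have h2 : HasFDerivAt (fun v => φ (res e v)) ((fderiv ℝ φ (res e v)).comp (res e)) v :=
      ((hφ.differentiable (by norm_num)) _).hasFDerivAt.comp v (res e).hasFDerivAt
    have h3 : HasFDerivAt (fun v : Fin 2 × Fin n → ℝ => v (p.1, t) * φ (res e v)) _ v := h1.mul h2
    rw [h3.fderiv]
    simp only [_root_.add_apply, _root_.smul_apply,
      ContinuousLinearMap.comp_apply, ContinuousLinearMap.proj_apply, smul_eq_mul]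
    rw [fderiv_pi_sum (fderiv ℝ φ (res e v)) (res e (Jv r t v)), Finset.mul_sum, add_comm]
    congr 1
    · simp only [Jv, ht, if_false, if_true, res_apply, ← hr]
      ring
    · refine Finset.sum_congr rfl fun q _ => ?_
      rw [res_apply]; ring
  have hint : ∀ t ∈ Finset.univ.erase r, Integrable (fun v => fderiv ℝ (fun v : Fin 2 × Fin n → ℝ => v (p.1, t) * φ (res e v)) v (Jv r t v)) π := by
    intro t _
    exact integrable_of_ae_ball π R hR _
      (((hψ t).continuous_fderiv (by norm_num)).clm_apply (continuous_Jv r t))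
  have h0 : ∫ v, ∑ t ∈ Finset.univ.erase r, fderiv ℝ (fun v : Fin 2 × Fin n → ℝ => v (p.1, t) * φ (res e v)) v (Jv r t v) ∂π = 0 := by
    rw [integral_finsetSum _ hint]
    refine Finset.sum_eq_zero fun t ht => ?_
    have ht' : r ≠ t := (Finset.ne_of_mem_erase ht).symm
    exact rot_ibp π R hR r t ht' (hinv r t ht') _ (hψ t)
  have hae : (fun v => ∑ t ∈ Finset.univ.erase r, fderiv ℝ (fun v : Fin 2 × Fin n → ℝ => v (p.1, t) * φ (res e v)) v (Jv r t v))
      =ᵐ[π] fun v => (∑ q, ((if p = q then (n : ℝ) else 0) - Tm (res e v) p q) *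
        fderiv ℝ φ (res e v) (Pi.single q 1)) - ((n : ℝ) - 1) * (res e v p * φ (res e v)) := by
    filter_upwards [hπ] with v hv
    rw [Finset.sum_congr rfl fun t ht => hder t (Finset.ne_of_mem_erase ht) v]
    rw [Finset.sum_add_distrib, Finset.sum_comm]
    simp only [← Finset.sum_mul]
    simp only [hr, sum_J e he v hv p]
    rw [← hr]
    rw [Finset.sum_const, Finset.card_erase_of_mem (Finset.mem_univ _)]
    have : 1 ≤ n := Nat.one_le_iff_ne_zero.2 (fun h => by subst h; exact r.elim0)
    simp only [Finset.card_univ, Fintype.card_fin, nsmul_eq_mul]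
    push_cast [this]
    ring
  rw [integral_congr_ae hae, integral_sub, integral_const_mul] at h0
  · linarith
  · refine integrable_of_ae_ball π R hR _ (continuous_finsetSum _ fun q _ => ?_)
    refine Continuous.mul ?_ (hdφ q)
    unfold Tm; simp only [res_apply]; fun_prop
  · refine integrable_of_ae_ball π R hR _ ?_
    have := hφ.continuous
    simp only [res_apply]; fun_prop

def SteinId {m : ℕ} (N : ℝ) (lam : Measure (Fin 2 × Fin m → ℝ)) : Prop :=
  ∀ (p : Fin 2 × Fin m) (φ : (Fin 2 × Fin m → ℝ) → ℝ), ContDiff ℝ 1 φ →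
    (N - 1) * ∫ x, x p * φ x ∂lam =
      ∫ x, ∑ q, ((if p = q then N else 0) - Tm x p q) * fderiv ℝ φ x (Pi.single q 1) ∂lam

lemma continuous_Tm {m : ℕ} (p q : Fin 2 × Fin m) : Continuous (fun x : Fin 2 × Fin m → ℝ => Tm x p q) := by
  unfold Tm; fun_prop

lemma moment_two {m : ℕ} (N : ℝ) (hN : 1 < N) (lam : Measure (Fin 2 × Fin m → ℝ))
    [IsProbabilityMeasure lam] (R : ℝ) (hR : ∀ᵐ x ∂lam, ‖x‖ ≤ R) (hS : SteinId N lam)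
    (p : Fin 2 × Fin m) : ∫ x, x p ^ 2 ∂lam = 1 := by
  have h := hS p (fun x => x p) (contDiff_apply ℝ ℝ p)
  have hd : ∀ (x : Fin 2 × Fin m → ℝ) q, fderiv ℝ (fun x : Fin 2 × Fin m → ℝ => x p) x (Pi.single q 1)
      = if p = q then 1 else 0 := by
    intro x q
    have : HasFDerivAt (fun x : Fin 2 × Fin m → ℝ => x p)
      (ContinuousLinearMap.proj (R := ℝ) (φ := fun _ : Fin 2 × Fin m => ℝ) p) x :=
      (ContinuousLinearMap.proj (R := ℝ) (φ := fun _ : Fin 2 × Fin m => ℝ) p).hasFDerivAt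
    rw [this.fderiv]
    simp [Pi.single_apply]
  simp only [hd, mul_ite, mul_one, mul_zero, Finset.sum_ite_eq, Finset.mem_univ, if_true] at h
  rw [integral_sub (integrable_const _) (integrable_of_ae_ball lam R hR _ (continuous_Tm p p))] at h
  have e1 : (fun x : Fin 2 × Fin m → ℝ => x p * x p) = fun x => x p ^ 2 := by ext; ring
  have e2 : (fun x : Fin 2 × Fin m → ℝ => Tm x p p) = fun x => x p ^ 2 := by ext; simp [Tm]; ring
  rw [e1, e2] at h
  simp only [integral_const, probReal_univ, smul_eq_mul, one_mul] at h
  have : N * (∫ x, x p ^ 2 ∂lam - 1) = 0 := by linarith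
  rcases mul_eq_zero.1 this with h | h <;> linarith

lemma Q_nonneg {m : ℕ} (x : Fin 2 × Fin m → ℝ) : 0 ≤ ∑ p, ∑ q, Tm x p q * (x p * x q) := by
  have : ∑ p, ∑ q, Tm x p q * (x p * x q) = ∑ a : Fin 2, ∑ b : Fin 2, (∑ i, x (a, i) * x (b, i)) ^ 2 := by
    simp only [Fintype.sum_prod_type, Tm]
    refine Finset.sum_congr rfl fun a _ => ?_
    rw [Finset.sum_comm]
    refine Finset.sum_congr rfl fun b _ => ?_
    rw [pow_two, Finset.sum_mul_sum]
    refine Finset.sum_congr rfl fun i _ => Finset.sum_congr rfl fun j _ => by ring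
  rw [this]
  positivity

lemma moment_four {m : ℕ} (N : ℝ) (hN : 1 < N) (lam : Measure (Fin 2 × Fin m → ℝ))
    [IsProbabilityMeasure lam] (R : ℝ) (hR : ∀ᵐ x ∂lam, ‖x‖ ≤ R) (hS : SteinId N lam) :
    ∫ x, (∑ p, x p ^ 2) ^ 2 ∂lam ≤ (2 * m) ^ 2 + 2 * (2 * m) := by
  have hI := fun f hf => integrable_of_ae_ball lam R hR f hf
  have hS1 : ∫ x, ∑ p, x p ^ 2 ∂lam = 2 * m := by
    rw [integral_finsetSum _ fun p _ => hI _ (by fun_prop)]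
    simp [moment_two N hN lam R hR hS]
  have hd : ∀ p (x : Fin 2 × Fin m → ℝ) q,
      fderiv ℝ (fun x : Fin 2 × Fin m → ℝ => (∑ r, x r ^ 2) * x p) x (Pi.single q 1)
      = 2 * (x p * x q) + if p = q then (∑ r, x r ^ 2) else 0 := by
    intro p x q
    have hp : ∀ p, HasFDerivAt (fun x : Fin 2 × Fin m → ℝ => x p)
      (ContinuousLinearMap.proj (R := ℝ) (φ := fun _ : Fin 2 × Fin m => ℝ) p) x := fun p =>
      (ContinuousLinearMap.proj (R := ℝ) (φ := fun _ : Fin 2 × Fin m => ℝ) p).hasFDerivAt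
    have hs : HasFDerivAt (fun x : Fin 2 × Fin m → ℝ => ∑ r, x r ^ 2) _ x :=
      HasFDerivAt.fun_sum fun r _ => (hp r).pow 2
    have h3 : HasFDerivAt (fun x : Fin 2 × Fin m → ℝ => (∑ r, x r ^ 2) * x p) _ x := hs.mul (hp p)
    rw [h3.fderiv]
    simp [Pi.single_apply, _root_.sum_apply]
    ring
  have h : ∀ p : Fin 2 × Fin m, _ := fun p => hS p (fun x : Fin 2 × Fin m → ℝ => (∑ r, x r ^ 2) * x p) (by fun_prop)
  simp only [hd] at h
  have h' := Finset.sum_congr (rfl : (Finset.univ : Finset (Fin 2 × Fin m)) = Finset.univ) fun p _ => h p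
  rw [← Finset.mul_sum, ← integral_finsetSum _ fun p _ => hI _ (by fun_prop), ← integral_finsetSum _ fun p _ => hI _ ?_] at h'
  swap
  · refine continuous_finsetSum _ fun q _ => ?_
    refine Continuous.mul (continuous_const.sub (continuous_Tm p q)) ?_
    split_ifs <;> fun_prop
  have e1 : ∀ x : Fin 2 × Fin m → ℝ, ∑ p, x p * ((∑ r, x r ^ 2) * x p) = (∑ r, x r ^ 2) ^ 2 := by
    intro x
    rw [pow_two, Finset.mul_sum]
    refine Finset.sum_congr rfl fun p _ => by ring
  have e2 : ∀ x : Fin 2 × Fin m → ℝ, ∑ p, ∑ q, ((if p = q then N else 0) - Tm x p q) *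
      (2 * (x p * x q) + if p = q then (∑ r, x r ^ 2) else 0)
      = (2 * N + N * (2 * m)) * (∑ r, x r ^ 2) - 2 * (∑ p, ∑ q, Tm x p q * (x p * x q)) - (∑ r, x r ^ 2) ^ 2 := by
    intro x
    set S := ∑ r, x r ^ 2 with hSd
    have : ∀ p, ∑ q, ((if p = q then N else 0) - Tm x p q) * (2 * (x p * x q) + if p = q then S else 0)
      = 2 * N * x p ^ 2 + N * S - 2 * (∑ q, Tm x p q * (x p * x q)) - x p ^ 2 * S := by
      intro p
      have : ∀ q, ((if p = q then N else 0) - Tm x p q) * (2 * (x p * x q) + if p = q then S else 0)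
        = (if p = q then (2 * N * (x p * x q) + N * S - Tm x p q * S) else 0) - 2 * (Tm x p q * (x p * x q)) := by
        intro q; split_ifs <;> ring
      simp only [this, Finset.sum_sub_distrib, Finset.sum_ite_eq, Finset.mem_univ, if_true, ← Finset.mul_sum]
      simp only [Tm]
      ring
    simp only [this, Finset.sum_sub_distrib, Finset.sum_add_distrib, ← Finset.mul_sum, ← Finset.sum_mul, ← hSd]
    simp
    ring
  simp only [e1, e2] at h'
  have hle : ∫ x, ((2 * N + N * (2 * m)) * (∑ r, x r ^ 2) - 2 * (∑ p, ∑ q, Tm x p q * (x p * x q)) - (∑ r, x r ^ 2) ^ 2) ∂lam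
     ≤ ∫ x, ((2 * N + N * (2 * m)) * (∑ r, x r ^ 2) - (∑ r, x r ^ 2) ^ 2) ∂lam := by
    refine integral_mono (hI _ ?_) (hI _ (by fun_prop)) fun x => ?_
    · unfold Tm; fun_prop
    · have := Q_nonneg x
      simp only
      linarith
  have hr : ∫ x, ((2 * N + N * (2 * m)) * (∑ r, x r ^ 2) - (∑ r, x r ^ 2) ^ 2) ∂lam
      = (2 * N + N * (2 * m)) * (2 * m) - ∫ x, (∑ r, x r ^ 2) ^ 2 ∂lam := by
    rw [integral_sub (hI _ (by fun_prop)) (hI _ (by fun_prop)), integral_const_mul, hS1]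
  rw [hr, ← h'] at hle
  have : N * (∫ x, (∑ p, x p ^ 2) ^ 2 ∂lam) ≤ N * ((2 * m) ^ 2 + 2 * (2 * m)) := by
    nlinarith
  exact le_of_mul_le_mul_left this (by linarith)

def Am {m : ℕ} (x : Fin 2 × Fin m → ℝ) (p q : Fin 2 × Fin m) : ℝ := (if p = q then 1 else 0) - Tm x p q

lemma continuous_Am {m : ℕ} (p q : Fin 2 × Fin m) : Continuous (fun x : Fin 2 × Fin m → ℝ => Am x p q) :=
  continuous_const.sub (continuous_Tm p q)

lemma hs_bound {m : ℕ} (N : ℝ) (hN : 1 < N) (lam : Measure (Fin 2 × Fin m → ℝ))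
    [IsProbabilityMeasure lam] (R : ℝ) (hR : ∀ᵐ x ∂lam, ‖x‖ ≤ R) (hS : SteinId N lam) :
    ∫ x, ∑ p, ∑ q, Am x p q ^ 2 ∂lam ≤ (2 * m) ^ 2 + (2 * m) := by
  have hI := fun f hf => integrable_of_ae_ball lam R hR f hf
  have hS1 : ∫ x, ∑ p, x p ^ 2 ∂lam = 2 * m := by
    rw [integral_finsetSum _ fun p _ => hI _ (by fun_prop)]
    simp [moment_two N hN lam R hR hS]
  have e : ∀ x : Fin 2 × Fin m → ℝ, ∑ p, ∑ q, Am x p q ^ 2 = 2 * m - 2 * (∑ p, x p ^ 2) + (∑ p, x p ^ 2) ^ 2 := by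
    intro x
    have h1 : ∀ p q, Am x p q ^ 2 = (if p = q then (1 - 2 * Tm x p q) else 0) + Tm x p q ^ 2 := by
      intro p q; unfold Am; split_ifs <;> ring
    have h2 : ∑ p, ∑ q, Tm x p q ^ 2 = (∑ p, x p ^ 2) ^ 2 := by
      rw [pow_two, Finset.sum_mul_sum]
      simp only [Fintype.sum_prod_type, Tm]
      refine Finset.sum_congr rfl fun a _ => ?_
      rw [Finset.sum_comm]
      conv_rhs => rw [Finset.sum_comm]
      refine Finset.sum_congr rfl fun b _ => ?_
      rw [Finset.sum_comm]
      refine Finset.sum_congr rfl fun i _ => Finset.sum_congr rfl fun j _ => by ring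
    simp only [h1, Finset.sum_add_distrib, h2, Finset.sum_ite_eq, Finset.mem_univ, if_true]
    congr 1
    rw [Finset.sum_sub_distrib, ← Finset.mul_sum]
    simp [Tm, pow_two]
  simp only [e]
  rw [integral_add (hI _ (by fun_prop)) (hI _ (by fun_prop)), integral_sub (integrable_const _) (hI _ (by fun_prop)),
    integral_const_mul (2:ℝ) (fun x : Fin 2 × Fin m → ℝ => ∑ p, x p ^ 2), hS1]
  have := moment_four N hN lam R hR hS
  simp only [integral_const, probReal_univ, smul_eq_mul, one_mul]
  linarith

lemma dir_bound {ι : Type} [Fintype ι] (g : (ι → ℝ) → ℝ) (hg : Differentiable ℝ g) (L : ℝ) (hL : 0 ≤ L)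
    (hf : ∀ x y : ι → ℝ, |g x - g y| ≤ L * Real.sqrt (∑ p, (x p - y p) ^ 2)) (y v : ι → ℝ) :
    |fderiv ℝ g y v| ≤ L * Real.sqrt (∑ p, v p ^ 2) := by
  have h1 : HasDerivAt (fun t : ℝ => g (y + t • v)) (fderiv ℝ g y v) 0 := by
    have h2 : HasDerivAt (fun t : ℝ => y + t • v) v 0 := by
      simpa using ((hasDerivAt_id (0:ℝ)).smul_const v).const_add y
    have h3 : HasFDerivAt g (fderiv ℝ g y) (y + (0:ℝ) • v) := by
      simpa using (hg y).hasFDerivAt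
    exact h3.comp_hasDerivAt (0:ℝ) h2
  refine h1.le_of_lip' (by positivity) (Filter.Eventually.of_forall fun t => ?_)
  refine (hf _ _).trans ?_
  rw [mul_assoc]
  refine mul_le_mul_of_nonneg_left ?_ hL
  have : ∀ p, ((y + t • v) p - (y + (0:ℝ) • v) p) ^ 2 = t ^ 2 * v p ^ 2 := by intro p; simp; ring
  simp only [this, ← Finset.mul_sum]
  rw [Real.sqrt_mul (sq_nonneg _), Real.sqrt_sq_eq_abs]
  simp [mul_comm]

lemma fderiv_affine {ι : Type} [Fintype ι] (φ : (ι → ℝ) → ℝ) (hφ : ContDiff ℝ 1 φ) (s : ℝ) (w x v : ι → ℝ) :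
    fderiv ℝ (fun x => φ (s • x + w)) x v = s * fderiv ℝ φ (s • x + w) v := by
  have h2 : HasFDerivAt (fun x : ι → ℝ => s • x + w) (s • ContinuousLinearMap.id ℝ (ι → ℝ)) x :=
    ((hasFDerivAt_id x).const_smul s).add_const w
  have h3 : HasFDerivAt φ (fderiv ℝ φ (s • x + w)) (s • x + w) :=
    ((hφ.differentiable (by norm_num)) _).hasFDerivAt
  have h4 : HasFDerivAt (fun x => φ (s • x + w)) _ x := h3.comp x h2
  rw [h4.fderiv]
  simp

section
variable {m : ℕ} (lam : Measure (Fin 2 × Fin m → ℝ)) [IsProbabilityMeasure lam]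

lemma int_ab (a : (Fin 2 × Fin m → ℝ) → ℝ) (ha : Integrable a lam) (φ : (Fin 2 × Fin m → ℝ) → ℝ)
    (hφ : Continuous φ) (C : ℝ) (hC : ∀ y, |φ y| ≤ C) (s c : ℝ) :
    Integrable (fun w : (Fin 2 × Fin m → ℝ) × (Fin 2 × Fin m → ℝ) => a w.1 * φ (s • w.1 + c • w.2))
      (lam.prod (Gam (Fin 2 × Fin m))) := by
  refine (ha.comp_fst _).mul_bdd (c := C) ?_ ?_
  · exact (hφ.comp (by fun_prop)).aestronglyMeasurable
  · exact Filter.Eventually.of_forall fun w => hC _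

lemma int_azb (a : (Fin 2 × Fin m → ℝ) → ℝ) (ha : Integrable a lam) (φ : (Fin 2 × Fin m → ℝ) → ℝ)
    (hφ : Continuous φ) (C : ℝ) (hC : ∀ y, |φ y| ≤ C) (s c : ℝ) (q : Fin 2 × Fin m) :
    Integrable (fun w : (Fin 2 × Fin m → ℝ) × (Fin 2 × Fin m → ℝ) => a w.1 * (w.2 q * φ (s • w.1 + c • w.2)))
      (lam.prod (Gam (Fin 2 × Fin m))) := by
  have := (ha.mul_prod (integrable_gam_eval q)).mul_bdd (c := C) (g := fun w : (Fin 2 × Fin m → ℝ) × (Fin 2 × Fin m → ℝ) => φ (s • w.1 + c • w.2)) ?_ ?_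
  · simpa only [mul_assoc] using this
  · exact (hφ.comp (by fun_prop)).aestronglyMeasurable
  · exact Filter.Eventually.of_forall fun w => hC _

lemma cont_dir (φ : (Fin 2 × Fin m → ℝ) → ℝ) (hφ : ContDiff ℝ 1 φ) (v : Fin 2 × Fin m → ℝ) :
    Continuous (fun y => fderiv ℝ φ y v) :=
  (hφ.continuous_fderiv (by norm_num)).clm_apply continuous_const

lemma swap_gam (a : (Fin 2 × Fin m → ℝ) → ℝ) (ha : Integrable a lam) (φ : (Fin 2 × Fin m → ℝ) → ℝ)
    (hφ : ContDiff ℝ 1 φ) (C : ℝ) (hC : ∀ y, |φ y| ≤ C) (q : Fin 2 × Fin m)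
    (hC' : ∀ y, |fderiv ℝ φ y (Pi.single q 1)| ≤ C) (s c : ℝ) :
    ∫ w, a w.1 * (w.2 q * φ (s • w.1 + c • w.2)) ∂(lam.prod (Gam (Fin 2 × Fin m)))
      = c * ∫ w, a w.1 * fderiv ℝ φ (s • w.1 + c • w.2) (Pi.single q 1) ∂(lam.prod (Gam (Fin 2 × Fin m))) := by
  rw [integral_prod _ (int_azb lam a ha φ hφ.continuous C hC s c q),
    integral_prod _ (int_ab lam a ha _ (cont_dir φ hφ _) C hC' s c), ← integral_const_mul]
  refine integral_congr_ae (Filter.Eventually.of_forall fun x => ?_)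
  simp only [integral_const_mul]
  have hC0 : 0 ≤ C := (abs_nonneg _).trans (hC 0)
  have h := stein_gam q (fun z => φ (c • z + s • x)) (by fun_prop) (C * (1 + |c|)) ?_ ?_
  · simp only [fderiv_affine φ hφ, integral_const_mul] at h
    simp only [add_comm (c • _) (s • x)] at h
    rw [h]; ring
  · intro z
    exact (hC _).trans (by nlinarith [abs_nonneg c])
  · intro z
    rw [fderiv_affine φ hφ, abs_mul]
    nlinarith [hC' (c • z + s • x), abs_nonneg c]

lemma swap_lam (N : ℝ) (R : ℝ) (hR : ∀ᵐ x ∂lam, ‖x‖ ≤ R) (hS : SteinId N lam) (φ : (Fin 2 × Fin m → ℝ) → ℝ)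
    (hφ : ContDiff ℝ 1 φ) (C : ℝ) (hC : ∀ y, |φ y| ≤ C) (p : Fin 2 × Fin m)
    (hC' : ∀ q y, |fderiv ℝ φ y (Pi.single q 1)| ≤ C) (s c : ℝ) :
    (N - 1) * ∫ w, w.1 p * φ (s • w.1 + c • w.2) ∂(lam.prod (Gam (Fin 2 × Fin m)))
      = s * ∑ q, ∫ w, ((if p = q then N else 0) - Tm w.1 p q) * fderiv ℝ φ (s • w.1 + c • w.2) (Pi.single q 1)
        ∂(lam.prod (Gam (Fin 2 × Fin m))) := by
  have hI := fun f hf => integrable_of_ae_ball lam R hR f hf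
  have hJ : ∀ q, Integrable (fun x : Fin 2 × Fin m → ℝ => (if p = q then N else 0) - Tm x p q) lam :=
    fun q => hI _ (continuous_const.sub (continuous_Tm p q))
  have hJ' := fun q => int_ab lam _ (hJ q) _ (cont_dir φ hφ (Pi.single q 1)) C (hC' q) s c
  rw [← integral_finsetSum _ fun q _ => hJ' q]
  rw [integral_prod_symm _ (int_ab lam (fun x => x p) (hI _ (by fun_prop)) φ hφ.continuous C hC s c),
    integral_prod_symm _ (integrable_finsetSum _ fun q _ => hJ' q), ← integral_const_mul, ← integral_const_mul]
  refine integral_congr_ae (Filter.Eventually.of_forall fun z => ?_)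
  have h := hS p (fun x => φ (s • x + c • z)) (by fun_prop)
  simp only [fderiv_affine φ hφ] at h
  simp only
  rw [h, ← integral_const_mul]
  congr 1; ext x
  rw [Finset.mul_sum]
  refine Finset.sum_congr rfl fun q _ => by ring
end

lemma contDiff_dir {ι : Type} [Fintype ι] (g : (ι → ℝ) → ℝ) (hg : ContDiff ℝ 2 g) (v : ι → ℝ) :
    ContDiff ℝ 1 (fun y => fderiv ℝ g y v) :=
  (hg.fderiv_right (m := 1) (by norm_num)).clm_apply contDiff_const

section
variable {m : ℕ} (lam : Measure (Fin 2 × Fin m → ℝ)) [IsProbabilityMeasure lam]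

lemma interp_id (N : ℝ) (R : ℝ) (hR : ∀ᵐ x ∂lam, ‖x‖ ≤ R) (hS : SteinId N lam)
    (g : (Fin 2 × Fin m → ℝ) → ℝ) (hg : ContDiff ℝ 2 g) (C : ℝ)
    (hG : ∀ p y, |fderiv ℝ g y (Pi.single p 1)| ≤ C)
    (hH : ∀ p q x, |fderiv ℝ (fun y => fderiv ℝ g y (Pi.single p 1)) x (Pi.single q 1)| ≤ C) (s c : ℝ) :
    (N - 1) * ∫ w, fderiv ℝ g (s • w.1 + c • w.2) (c • w.1 - s • w.2) ∂(lam.prod (Gam (Fin 2 × Fin m)))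
     = s * ∫ w, fderiv ℝ g (s • w.1 + c • w.2) (fun p => ∑ q, Am w.1 p q * w.2 q)
       ∂(lam.prod (Gam (Fin 2 × Fin m))) := by
  have hI := fun f hf => integrable_of_ae_ball lam R hR f hf
  have hc1 := fun p => contDiff_dir g hg (Pi.single p 1)
  have hJ : ∀ p q, Integrable (fun x : Fin 2 × Fin m → ℝ => (if p = q then N else 0) - Tm x p q) lam :=
    fun p q => hI _ (continuous_const.sub (continuous_Tm p q))
  have hA : ∀ p q, Integrable (fun x : Fin 2 × Fin m → ℝ => Am x p q) lam := fun p q => hI _ (continuous_Am p q)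
  have iX := fun p => int_ab lam (fun x => x p) (hI _ (by fun_prop)) _ (hc1 p).continuous C (hG p) s c
  have iD := fun p => int_azb lam (fun _ => (1:ℝ)) (integrable_const _) _ (hc1 p).continuous C (hG p) s c p
  have iE := fun p q => int_azb lam _ (hJ p q) _ (hc1 p).continuous C (hG p) s c q
  have iA := fun p q => int_azb lam _ (hA p q) _ (hc1 p).continuous C (hG p) s c q
  have hXs := fun p => swap_lam lam N R hR hS _ (hc1 p) C (hG p) p (hH p) s c
  have hE := fun p q => swap_gam lam _ (hJ p q) _ (hc1 p) C (hG p) q (hH p q) s c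
  set P := lam.prod (Gam (Fin 2 × Fin m)) with hP
  have iXD : ∀ p, Integrable (fun w : (Fin 2 × Fin m → ℝ) × (Fin 2 × Fin m → ℝ) => c * (w.1 p * fderiv ℝ g (s • w.1 + c • w.2) (Pi.single p 1))
        - s * (1 * (w.2 p * fderiv ℝ g (s • w.1 + c • w.2) (Pi.single p 1)))) P :=
    fun p => ((iX p).const_mul c).sub ((iD p).const_mul s)
  have l1 : ∀ w : (Fin 2 × Fin m → ℝ) × (Fin 2 × Fin m → ℝ), fderiv ℝ g (s • w.1 + c • w.2) (c • w.1 - s • w.2)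
      = ∑ p, (c * (w.1 p * fderiv ℝ g (s • w.1 + c • w.2) (Pi.single p 1))
        - s * (1 * (w.2 p * fderiv ℝ g (s • w.1 + c • w.2) (Pi.single p 1)))) := by
    intro w
    rw [fderiv_pi_sum]
    refine Finset.sum_congr rfl fun p _ => ?_
    simp; ring
  have l2 : ∀ w : (Fin 2 × Fin m → ℝ) × (Fin 2 × Fin m → ℝ), fderiv ℝ g (s • w.1 + c • w.2) (fun p => ∑ q, Am w.1 p q * w.2 q)
      = ∑ p, ∑ q, Am w.1 p q * (w.2 q * fderiv ℝ g (s • w.1 + c • w.2) (Pi.single p 1)) := by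
    intro w
    rw [fderiv_pi_sum]
    refine Finset.sum_congr rfl fun p _ => ?_
    rw [Finset.mul_sum]
    refine Finset.sum_congr rfl fun q _ => by ring
  simp only [l1, l2]
  rw [integral_finsetSum _ fun p _ => iXD p,
    integral_finsetSum _ fun p _ => integrable_finsetSum _ fun q _ => iA p q, Finset.mul_sum, Finset.mul_sum]
  refine Finset.sum_congr rfl fun p _ => ?_
  rw [integral_sub ((iX p).const_mul c) ((iD p).const_mul s), integral_const_mul, integral_const_mul,
    integral_finsetSum _ fun q _ => iA p q]
  have hAE : ∀ q, ∫ w, Am w.1 p q * (w.2 q * fderiv ℝ g (s • w.1 + c • w.2) (Pi.single p 1)) ∂P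
      = c * (∫ w, ((if p = q then N else 0) - Tm w.1 p q) *
          fderiv ℝ (fun y => fderiv ℝ g y (Pi.single p 1)) (s • w.1 + c • w.2) (Pi.single q 1) ∂P)
        - (if p = q then (N - 1) * ∫ w, 1 * (w.2 p * fderiv ℝ g (s • w.1 + c • w.2) (Pi.single p 1)) ∂P else 0) := by
    intro q
    rw [← hE p q]
    by_cases hpq : p = q
    · subst hpq
      simp only [if_true]
      rw [← integral_const_mul]
      have iE' := iE p p
      simp only [if_true] at iE'
      rw [← integral_sub iE' ((iD p).const_mul _)]
      congr 1; ext w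
      simp only [Am, if_true]; ring
    · simp only [Am, if_neg hpq, sub_zero]
  simp only [hAE, Finset.sum_sub_distrib, Finset.sum_ite_eq, Finset.mem_univ, if_true, ← Finset.mul_sum]
  linear_combination c * hXs p

lemma Az_sq (R : ℝ) (hR : ∀ᵐ x ∂lam, ‖x‖ ≤ R) :
    Integrable (fun w : (Fin 2 × Fin m → ℝ) × (Fin 2 × Fin m → ℝ) => ∑ p, (∑ q, Am w.1 p q * w.2 q) ^ 2)
       (lam.prod (Gam (Fin 2 × Fin m))) ∧
    ∫ w, ∑ p, (∑ q, Am w.1 p q * w.2 q) ^ 2 ∂(lam.prod (Gam (Fin 2 × Fin m))) = ∫ x, ∑ p, ∑ q, Am x p q ^ 2 ∂lam := by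
  have hI := fun f hf => integrable_of_ae_ball lam R hR f hf
  have hA : ∀ p q r, Integrable (fun x : Fin 2 × Fin m → ℝ => Am x p q * Am x p r) lam := fun p q r =>
    hI _ ((continuous_Am p q).mul (continuous_Am p r))
  have l : ∀ w : (Fin 2 × Fin m → ℝ) × (Fin 2 × Fin m → ℝ), ∑ p, (∑ q, Am w.1 p q * w.2 q) ^ 2
     = ∑ p, ∑ q, ∑ r, (Am w.1 p q * Am w.1 p r) * (w.2 q * w.2 r) := by
    intro w
    refine Finset.sum_congr rfl fun p _ => ?_
    rw [pow_two, Finset.sum_mul_sum]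
    refine Finset.sum_congr rfl fun q _ => Finset.sum_congr rfl fun r _ => by ring
  have iq : ∀ p q, Integrable (fun x : Fin 2 × Fin m → ℝ => Am x p q ^ 2) lam := fun p q =>
    hI _ ((continuous_Am p q).pow 2)
  have i3 := fun p q r => (hA p q r).mul_prod (integrable_gam_mul q r)
  have i2 := fun p q => integrable_finsetSum Finset.univ fun r _ => i3 p q r
  have i1 := fun p => integrable_finsetSum Finset.univ fun q _ => i2 p q
  simp only [l]
  refine ⟨integrable_finsetSum _ fun p _ => i1 p, ?_⟩
  rw [integral_finsetSum _ fun p _ => i1 p, integral_finsetSum _ fun p _ => ?_]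
  swap
  · exact integrable_finsetSum _ fun q _ => iq p q
  refine Finset.sum_congr rfl fun p _ => ?_
  rw [integral_finsetSum _ fun q _ => i2 p q, integral_finsetSum _ fun q _ => iq p q]
  refine Finset.sum_congr rfl fun q _ => ?_
  rw [integral_finsetSum _ fun r _ => i3 p q r]
  have : ∀ r, ∫ w, (Am w.1 p q * Am w.1 p r) * (w.2 q * w.2 r) ∂(lam.prod (Gam (Fin 2 × Fin m)))
     = (∫ x, Am x p q * Am x p r ∂lam) * (if q = r then 1 else 0) := by
    intro r
    rw [← integral_gam_mul q r, ← integral_prod_mul]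
  simp only [this, mul_ite, mul_one, mul_zero, Finset.sum_ite_eq, Finset.mem_univ, if_true, pow_two]

lemma rhs_bound (N : ℝ) (hN : 1 < N) (hm : 0 < m) (R : ℝ) (hR : ∀ᵐ x ∂lam, ‖x‖ ≤ R) (hS : SteinId N lam)
    (g : (Fin 2 × Fin m → ℝ) → ℝ) (hg : ContDiff ℝ 2 g)
    (hL : ∀ x y, |g x - g y| ≤ √2 * Real.sqrt (∑ p, (x p - y p) ^ 2)) (s c : ℝ) :
    ∫ w, fderiv ℝ g (s • w.1 + c • w.2) (fun p => ∑ q, Am w.1 p q * w.2 q)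
       ∂(lam.prod (Gam (Fin 2 × Fin m))) ≤ 4 * m := by
  obtain ⟨hi, he⟩ := Az_sq lam R hR
  have hm' : (1:ℝ) ≤ m := by exact_mod_cast hm
  set P := lam.prod (Gam (Fin 2 × Fin m)) with hP
  have hpt : ∀ w : (Fin 2 × Fin m → ℝ) × (Fin 2 × Fin m → ℝ),
      fderiv ℝ g (s • w.1 + c • w.2) (fun p => ∑ q, Am w.1 p q * w.2 q) ≤
        (4 * m : ℝ)⁻¹ * (∑ p, (∑ q, Am w.1 p q * w.2 q) ^ 2) + 2 * m := by
    intro w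
    refine (le_abs_self _).trans ((dir_bound g (hg.differentiable (by norm_num)) _ (by positivity) hL _ _).trans ?_)
    set S := ∑ p, (∑ q, Am w.1 p q * w.2 q) ^ 2 with hSd
    have hS0 : 0 ≤ S := by positivity
    rw [← Real.sqrt_mul (by norm_num)]
    refine Real.sqrt_le_iff.2 ⟨by positivity, ?_⟩
    have : (4 * m : ℝ)⁻¹ * S * (2 * m) = S / 2 := by field_simp; ring
    nlinarith [sq_nonneg ((4 * m : ℝ)⁻¹ * S - 2 * m)]
  have hb : ∫ w, ((4 * m : ℝ)⁻¹ * (∑ p, (∑ q, Am w.1 p q * w.2 q) ^ 2) + 2 * m) ∂P ≤ 4 * m := by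
    rw [integral_add (hi.const_mul _) (integrable_const _), integral_const_mul, he]
    have := hs_bound N hN lam R hR hS
    have h2 : (4 * m : ℝ)⁻¹ * (∫ x, ∑ p, ∑ q, Am x p q ^ 2 ∂lam) ≤ (4 * m : ℝ)⁻¹ * ((2 * m) ^ 2 + 2 * m) :=
      mul_le_mul_of_nonneg_left this (by positivity)
    have h3 : (4 * m : ℝ)⁻¹ * ((2 * m) ^ 2 + 2 * m) = m + 1 / 2 := by field_simp; ring
    simp only [integral_const, probReal_univ, smul_eq_mul, one_mul]
    linarith
  by_cases hint : Integrable (fun w : (Fin 2 × Fin m → ℝ) × (Fin 2 × Fin m → ℝ) => fderiv ℝ g (s • w.1 + c • w.2) (fun p => ∑ q, Am w.1 p q * w.2 q)) P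
  · exact (integral_mono hint ((hi.const_mul _).add (integrable_const _)) hpt).trans hb
  · rw [integral_undef hint]; positivity

end

lemma sqrt_sum_le {ι : Type} [Fintype ι] (v : ι → ℝ) : √(∑ p, v p ^ 2) ≤ √(Fintype.card ι) * ‖v‖ := by
  rw [← Real.sqrt_sq (norm_nonneg v), ← Real.sqrt_mul (by positivity)]
  refine Real.sqrt_le_sqrt ?_
  calc ∑ p, v p ^ 2 ≤ ∑ p : ι, ‖v‖ ^ 2 := Finset.sum_le_sum fun p _ => by
        rw [← sq_abs]; exact pow_le_pow_left₀ (abs_nonneg _) (norm_le_pi_norm v p) 2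
    _ = _ := by simp

lemma integrable_gam_norm {ι : Type} [Fintype ι] : Integrable (fun z : ι → ℝ => ‖z‖) (Gam ι) := by
  refine Integrable.mono' (integrable_finsetSum Finset.univ fun q _ => (integrable_gam_eval (ι := ι) q).abs)
    continuous_norm.aestronglyMeasurable (Filter.Eventually.of_forall fun z => ?_)
  rw [norm_norm]
  refine (pi_norm_le_iff_of_nonneg (by positivity)).2 fun q => ?_
  exact Finset.single_le_sum (f := fun q => |z q|) (fun i _ => abs_nonneg _) (Finset.mem_univ q)

lemma core_bound {m : ℕ} (lam : Measure (Fin 2 × Fin m → ℝ)) [IsProbabilityMeasure lam]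
    (N : ℝ) (hN : 1 < N) (hm : 0 < m) (R : ℝ) (hR : ∀ᵐ x ∂lam, ‖x‖ ≤ R) (hS : SteinId N lam)
    (g : (Fin 2 × Fin m → ℝ) → ℝ) (hg : ContDiff ℝ 2 g)
    (hL : ∀ x y, |g x - g y| ≤ √2 * Real.sqrt (∑ p, (x p - y p) ^ 2)) (C : ℝ)
    (hH : ∀ p q x, |fderiv ℝ (fun y => fderiv ℝ g y (Pi.single p 1)) x (Pi.single q 1)| ≤ C) :
    ∫ x, g x ∂lam - ∫ z, g z ∂(Gam (Fin 2 × Fin m)) ≤ 4 * m / (N - 1) := by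
  have hd : Differentiable ℝ g := hg.differentiable (by norm_num)
  have hfc : Continuous (fderiv ℝ g) := hg.continuous_fderiv (by norm_num)
  have hdb := dir_bound g hd √2 (by positivity) hL
  have hG : ∀ p y, |fderiv ℝ g y (Pi.single p 1)| ≤ max C √2 := by
    intro p y
    refine (hdb y _).trans ?_
    have : ∑ q, (Pi.single p 1 : Fin 2 × Fin m → ℝ) q ^ 2 = 1 := by
      simp [Pi.single_apply]
    rw [this]; simp
  have hH' := fun p q x => (hH p q x).trans (le_max_left C √2)
  obtain ⟨K, hK⟩ : ∃ K : ℝ, K = √2 * √(Fintype.card (Fin 2 × Fin m)) := ⟨_, rfl⟩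
  have hK0 : 0 ≤ K := by rw [hK]; positivity
  have hdK : ∀ y v, |fderiv ℝ g y v| ≤ K * ‖v‖ := by
    intro y v
    refine (hdb y v).trans ?_
    rw [hK, mul_assoc]
    exact mul_le_mul_of_nonneg_left (sqrt_sum_le v) (by positivity)
  have hgK : ∀ y, |g y| ≤ |g 0| + K * ‖y‖ := by
    intro y
    have h1 := hL y 0
    have h2 : √2 * √(∑ p, (y p - (0 : Fin 2 × Fin m → ℝ) p) ^ 2) ≤ K * ‖y‖ := by
      rw [hK, mul_assoc]
      refine mul_le_mul_of_nonneg_left ?_ (by positivity)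
      simpa using sqrt_sum_le y
    have h3 := abs_sub_abs_le_abs_sub (g y) (g 0)
    linarith
  set P := lam.prod (Gam (Fin 2 × Fin m)) with hP
  have hnx : Integrable (fun w : (Fin 2 × Fin m → ℝ) × (Fin 2 × Fin m → ℝ) => ‖w.1‖) P :=
    (integrable_of_ae_ball lam R hR _ continuous_norm).comp_fst _
  have hnz : Integrable (fun w : (Fin 2 × Fin m → ℝ) × (Fin 2 × Fin m → ℝ) => ‖w.2‖) P :=
    integrable_gam_norm.comp_snd _
  have hn := hnx.add hnz
  have hnorm : ∀ (a b : ℝ), |a| ≤ 1 → |b| ≤ 1 → ∀ x z : Fin 2 × Fin m → ℝ, ‖a • x + b • z‖ ≤ ‖x‖ + ‖z‖ := by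
    intro a b ha hb x z
    refine (norm_add_le _ _).trans ?_
    rw [norm_smul, norm_smul, Real.norm_eq_abs, Real.norm_eq_abs]
    nlinarith [norm_nonneg x, norm_nonneg z]
  let h : ℝ → ℝ := fun θ => ∫ w, g (Real.sin θ • w.1 + Real.cos θ • w.2) ∂P
  have hder : ∀ θ, HasDerivAt h (∫ w, fderiv ℝ g (Real.sin θ • w.1 + Real.cos θ • w.2)
      (Real.cos θ • w.1 - Real.sin θ • w.2) ∂P) θ := by
    intro θ
    refine (hasDerivAt_integral_of_dominated_loc_of_deriv_le (μ := P) (x₀ := θ) (s := Set.univ)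
      (F := fun θ w => g (Real.sin θ • w.1 + Real.cos θ • w.2))
      (F' := fun θ w => fderiv ℝ g (Real.sin θ • w.1 + Real.cos θ • w.2) (Real.cos θ • w.1 - Real.sin θ • w.2))
      (bound := fun w => K * (‖w.1‖ + ‖w.2‖)) Filter.univ_mem ?_ ?_ ?_ ?_ ?_ ?_).2
    · exact Filter.Eventually.of_forall fun t => (hg.continuous.comp (by fun_prop)).aestronglyMeasurable
    · refine Integrable.mono' ((integrable_const |g 0|).add (hn.const_mul K)) (hg.continuous.comp (by fun_prop)).aestronglyMeasurable
        (Filter.Eventually.of_forall fun w => ?_)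
      refine (hgK _).trans ?_
      simp only [Pi.add_apply]
      have := hnorm _ _ (Real.abs_sin_le_one θ) (Real.abs_cos_le_one θ) w.1 w.2
      nlinarith
    · exact ((hfc.comp (by fun_prop)).clm_apply (by fun_prop)).aestronglyMeasurable
    · refine Filter.Eventually.of_forall fun w t _ => ?_
      refine (hdK _ _).trans (mul_le_mul_of_nonneg_left ?_ hK0)
      rw [sub_eq_add_neg, ← neg_smul]
      exact hnorm _ _ (Real.abs_cos_le_one t) (by rw [abs_neg]; exact Real.abs_sin_le_one t) _ _
    · exact hn.const_mul K
    · refine Filter.Eventually.of_forall fun w t _ => ?_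
      have h1 : HasDerivAt (fun t => Real.sin t • w.1 + Real.cos t • w.2) (Real.cos t • w.1 - Real.sin t • w.2) t := by
        have := ((Real.hasDerivAt_sin t).smul_const w.1).add ((Real.hasDerivAt_cos t).smul_const w.2)
        rw [sub_eq_add_neg, ← neg_smul]
        exact this
      exact ((hd _).hasFDerivAt).comp_hasDerivAt t h1
  have hanti : AntitoneOn (fun θ => h θ + 4 * m / (N - 1) * Real.cos θ) (Set.Icc 0 (Real.pi / 2)) := by
    have hder2 : ∀ θ, HasDerivAt (fun θ => h θ + 4 * m / (N - 1) * Real.cos θ) _ θ := fun θ =>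
      (hder θ).add ((Real.hasDerivAt_cos θ).const_mul (4 * m / (N - 1)))
    refine antitoneOn_of_deriv_nonpos (convex_Icc _ _) (fun θ _ => (hder2 θ).continuousAt.continuousWithinAt)
      (fun θ _ => (hder2 θ).differentiableAt.differentiableWithinAt) fun θ hθ => ?_
    rw [interior_Icc] at hθ
    rw [(hder2 θ).deriv]
    have hs : 0 ≤ Real.sin θ := Real.sin_nonneg_of_nonneg_of_le_pi hθ.1.le (by linarith [hθ.2, Real.pi_pos])
    have hid := interp_id lam N R hR hS g hg _ hG hH' (Real.sin θ) (Real.cos θ)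
    have hb := rhs_bound lam N hN hm R hR hS g hg hL (Real.sin θ) (Real.cos θ)
    rw [← hP] at hid hb
    have hb' := mul_le_mul_of_nonneg_left hb hs
    rw [← hid] at hb'
    have : ∫ w, fderiv ℝ g (Real.sin θ • w.1 + Real.cos θ • w.2) (Real.cos θ • w.1 - Real.sin θ • w.2) ∂P
       ≤ 4 * m / (N - 1) * Real.sin θ := by
      rw [div_mul_eq_mul_div, le_div_iff₀ (by linarith)]
      linarith
    linarith
  have hfin := hanti (Set.left_mem_Icc.2 (by positivity)) (Set.right_mem_Icc.2 (by positivity)) (by positivity)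
  simp only [Real.cos_zero, Real.cos_pi_div_two, mul_one, mul_zero, add_zero] at hfin
  have e1 : h (Real.pi / 2) = ∫ x, g x ∂lam := by
    simp only [h, Real.sin_pi_div_two, Real.cos_pi_div_two, one_smul, zero_smul, add_zero]
    rw [hP, integral_fun_fst]
    simp
  have e0 : h 0 = ∫ z, g z ∂(Gam (Fin 2 × Fin m)) := by
    simp only [h, Real.sin_zero, Real.cos_zero, one_smul, zero_smul, zero_add]
    rw [hP, integral_fun_snd]
    simp
  rw [e1, e0] at hfin
  linarith

noncomputable def rotM {n : ℕ} (r t : Fin n) (ε : ℝ) : Matrix (Fin n) (Fin n) ℝ :=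
  fun i => if i = r then Real.cos ε • Pi.single r 1 + Real.sin ε • Pi.single t 1 else
    if i = t then Real.cos ε • Pi.single t 1 - Real.sin ε • Pi.single r 1 else Pi.single i 1

lemma rotM_mulVec {n : ℕ} (r t : Fin n) (ε : ℝ) (w : Fin n → ℝ) (i : Fin n) :
    (rotM r t ε *ᵥ w) i = if i = r then Real.cos ε * w r + Real.sin ε * w t else
      if i = t then Real.cos ε * w t - Real.sin ε * w r else w i := by
  show (if i = r then Real.cos ε • Pi.single r 1 + Real.sin ε • Pi.single t 1 else
    if i = t then Real.cos ε • Pi.single t 1 - Real.sin ε • Pi.single r 1 else Pi.single i 1) ⬝ᵥ w = _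
  split_ifs <;> simp [add_dotProduct, sub_dotProduct, smul_dotProduct]

lemma rotM_orth {n : ℕ} (r t : Fin n) (hrt : r ≠ t) (ε : ℝ) : (rotM r t ε)ᵀ * rotM r t ε = 1 := by
  rw [mul_eq_one_comm]
  ext i j
  have : (rotM r t ε * (rotM r t ε)ᵀ) i j = (rotM r t ε *ᵥ (rotM r t ε j)) i := rfl
  rw [this, rotM_mulVec]
  have h := Real.cos_sq_add_sin_sq ε
  unfold rotM
  rw [Matrix.one_apply]
  have hrt' := hrt.symm
  by_cases h1 : i = r
  · subst h1
    by_cases h2 : j = i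
    · subst h2; simp [hrt, hrt']; linarith
    · by_cases h3 : j = t
      · subst h3; simp [hrt, hrt']; ring
      · simp [h2, h3, Ne.symm h2, Pi.single_apply, Ne.symm h3, hrt]
  · by_cases h4 : i = t
    · subst h4
      by_cases h2 : j = i
      · subst h2; simp [hrt, hrt']; linarith
      · by_cases h3 : j = r
        · subst h3; simp [hrt, hrt']; ring
        · simp [h2, h3, Ne.symm h2, Pi.single_apply, Ne.symm h3, hrt']
    · by_cases h2 : j = r
      · subst h2; simp [h1, h4, Pi.single_apply]
      · by_cases h3 : j = t
        · subst h3; simp [h1, h4, Pi.single_apply, hrt']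
        · simp [h1, h4, h2, h3, Pi.single_apply]

lemma exists_orth {n : ℕ} (hn : 2 ≤ n) (a : Fin n → ℝ) (ha : a ⬝ᵥ a = 1) :
    ∃ w : Fin n → ℝ, a ⬝ᵥ w = 0 ∧ w ⬝ᵥ w = 1 := by
  obtain ⟨i, hi⟩ : ∃ i, a i ≠ 0 := by
    by_contra! h
    have : a = 0 := funext h
    simp [this] at ha
  have : Nontrivial (Fin n) := Fin.nontrivial_iff_two_le.2 hn
  obtain ⟨j, hj⟩ := exists_ne i
  let w : Fin n → ℝ := a j • Pi.single i 1 - a i • Pi.single j 1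
  have h1 : a ⬝ᵥ w = 0 := by simp [w, dotProduct_sub, dotProduct_smul]; ring
  have h2 : w ⬝ᵥ w = a j ^ 2 + a i ^ 2 := by
    simp [w, dotProduct_sub, dotProduct_smul, sub_dotProduct, smul_dotProduct, hj, hj.symm, Pi.single_apply]; ring
  have h3 : 0 < w ⬝ᵥ w := by rw [h2]; positivity
  refine ⟨(√(w ⬝ᵥ w))⁻¹ • w, by simp [dotProduct_smul, h1], ?_⟩
  rw [dotProduct_smul, smul_dotProduct, smul_eq_mul, smul_eq_mul]
  have h4 := Real.sqrt_pos.2 h3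
  have h5 := Real.mul_self_sqrt h3.le
  field_simp
  nlinarith

lemma exists_frame {n : ℕ} (hn : 2 ≤ n) (κ c : ℝ) (hκ : 0 < κ) (a b : Fin n → ℝ) (ha : a ⬝ᵥ a = κ)
    (hb : b ⬝ᵥ b = κ) (hab : a ⬝ᵥ b = κ * c) :
    c ^ 2 ≤ 1 ∧ ∃ u : Fin 2 → Fin n → ℝ, (∀ i j, u i ⬝ᵥ u j = if i = j then 1 else 0) ∧ a = √κ • u 0 ∧
      b = √κ • (c • u 0 + √(1 - c ^ 2) • u 1) := by
  have hd : (b - c • a) ⬝ᵥ (b - c • a) = κ * (1 - c ^ 2) := by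
    have hba : b ⬝ᵥ a = κ * c := by rw [dotProduct_comm]; exact hab
    simp only [sub_dotProduct, dotProduct_sub, smul_dotProduct, dotProduct_smul, ha, hb, hab, hba, smul_eq_mul]
    ring
  have hd0 : 0 ≤ (b - c • a) ⬝ᵥ (b - c • a) := by
    simp only [dotProduct]; exact Finset.sum_nonneg fun i _ => mul_self_nonneg _
  have hc : c ^ 2 ≤ 1 := by
    rw [hd] at hd0
    have := nonneg_of_mul_nonneg_right hd0 hκ
    linarith
  refine ⟨hc, ?_⟩
  have hk := Real.sqrt_pos.2 hκ
  have hkk := Real.mul_self_sqrt hκ.le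
  obtain ⟨u0, hu0⟩ : ∃ u0, u0 = (√κ)⁻¹ • a := ⟨_, rfl⟩
  have hau : a = √κ • u0 := by rw [hu0, smul_smul, mul_inv_cancel₀ hk.ne', one_smul]
  have hu00 : u0 ⬝ᵥ u0 = 1 := by
    rw [hu0, dotProduct_smul, smul_dotProduct, ha, smul_eq_mul, smul_eq_mul]
    field_simp; nlinarith
  suffices H : ∃ u1, u0 ⬝ᵥ u1 = 0 ∧ u1 ⬝ᵥ u1 = 1 ∧ b = √κ • (c • u0 + √(1 - c ^ 2) • u1) by
    obtain ⟨u1, h01, h11, hb1⟩ := H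
    refine ⟨![u0, u1], ?_, hau, hb1⟩
    intro i j
    fin_cases i <;> fin_cases j <;> simp [hu00, h01, h11, dotProduct_comm u1 u0]
  by_cases hs : 1 - c ^ 2 = 0
  · obtain ⟨w, hw1, hw2⟩ := exists_orth hn u0 hu00
    refine ⟨w, hw1, hw2, ?_⟩
    rw [hs] at hd ⊢
    rw [mul_zero, dotProduct_self_eq_zero] at hd
    rw [Real.sqrt_zero, zero_smul, add_zero, smul_comm, ← hau]
    exact sub_eq_zero.1 hd
  · have hs' : 0 < 1 - c ^ 2 := lt_of_le_of_ne (by linarith) (Ne.symm hs)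
    have hq := Real.sqrt_pos.2 hs'
    have hqq := Real.mul_self_sqrt hs'.le
    set s := √(1 - c ^ 2) with hsd
    refine ⟨(√κ * s)⁻¹ • (b - c • a), ?_, ?_, ?_⟩
    · rw [hu0, dotProduct_smul, smul_dotProduct, dotProduct_sub, dotProduct_smul, ha, hab]
      simp only [smul_eq_mul]; ring
    · rw [dotProduct_smul, smul_dotProduct, hd, ← hqq]
      simp only [smul_eq_mul]
      field_simp; nlinarith
    · rw [smul_add, smul_smul, smul_smul, smul_smul, mul_comm (√κ) c, ← smul_smul, ← hau, mul_inv_cancel₀ (by positivity), one_smul]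
      simp

noncomputable def padv {k n : ℕ} (h : k ≤ n) (z : Fin k → ℝ) : Fin n → ℝ := Function.extend (Fin.castLE h) z 0

lemma dot_padv {k n : ℕ} (h : k ≤ n) (z : Fin k → ℝ) (w : Fin n → ℝ) :
    w ⬝ᵥ padv h z = ∑ j, w (Fin.castLE h j) * z j := by
  symm
  have hinj : Function.Injective (Fin.castLE h) := Fin.castLE_injective h
  refine Fintype.sum_of_injective _ hinj _ _ ?_ ?_
  · intro i hi
    have : padv h z i = 0 := by
      unfold padv
      rw [Function.extend_apply' _ _ _ hi]; rfl
    simp [this]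
  · intro j
    simp [padv, hinj.extend_apply]

lemma dot_padv_padv {k n : ℕ} (h : k ≤ n) (z z' : Fin k → ℝ) : padv h z ⬝ᵥ padv h z' = z ⬝ᵥ z' := by
  rw [dot_padv]
  refine Finset.sum_congr rfl fun j _ => ?_
  simp [padv, (Fin.castLE_injective h).extend_apply]

lemma submatrix_mulVec_padv {k m n : ℕ} (hm : m ≤ n) (hk : k ≤ n) (M : Matrix (Fin n) (Fin n) ℝ) (z : Fin k → ℝ) (i : Fin m) :
    (M.submatrix (Fin.castLE hm) (Fin.castLE hk) *ᵥ z) i = (M *ᵥ padv hk z) (Fin.castLE hm i) := by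
  unfold Matrix.mulVec
  rw [dot_padv]
  rfl

noncomputable def Um {n : ℕ} (u : Fin 2 → Fin n → ℝ) (M : Matrix (Fin n) (Fin n) ℝ) : Fin 2 × Fin n → ℝ :=
  fun p => √(n : ℝ) * (M *ᵥ u p.1) p.2

lemma measurable_mulVec {m n : ℕ} (w : Fin n → ℝ) (i : Fin m) :
    Measurable (fun M : Matrix (Fin m) (Fin n) ℝ => (M *ᵥ w) i) := by
  have he : ∀ j, Measurable (fun M : Matrix (Fin m) (Fin n) ℝ => M i j) := fun j =>
    (measurable_pi_apply j).comp (measurable_pi_apply (X := fun _ : Fin m => Fin n → ℝ) i)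
  simp only [Matrix.mulVec, dotProduct]
  exact Finset.measurable_sum _ fun j _ => (he j).mul_const _

lemma measurable_Um {n : ℕ} (u : Fin 2 → Fin n → ℝ) : Measurable (Um u) :=
  measurable_pi_iff.2 fun p => (measurable_mulVec (u p.1) p.2).const_mul _

lemma measurable_mulLeft {n : ℕ} (Q : Matrix (Fin n) (Fin n) ℝ) :
    Measurable (fun M : Matrix (Fin n) (Fin n) ℝ => Q * M) := by
  refine measurable_pi_iff.2 fun i => measurable_pi_iff.2 fun j => ?_
  have he : ∀ l, Measurable (fun M : Matrix (Fin n) (Fin n) ℝ => M l j) := fun l =>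
    (measurable_pi_apply j).comp (measurable_pi_apply (X := fun _ : Fin n => Fin n → ℝ) l)
  simp only [Matrix.mul_apply]
  exact Finset.measurable_sum _ fun l _ => (he l).const_mul _

lemma measurable_suo {m k n : ℕ} (hm : m ≤ n) (hk : k ≤ n) : Measurable (suoOfHaar hm hk) := by
  refine measurable_pi_iff.2 fun i => measurable_pi_iff.2 fun j => ?_
  have he : ∀ l j, Measurable (fun M : Matrix (Fin n) (Fin n) ℝ => M l j) := fun l j =>
    (measurable_pi_apply j).comp (measurable_pi_apply (X := fun _ : Fin n => Fin n → ℝ) l)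
  exact (he _ _).const_mul _

lemma lam_props {m n : ℕ} (hmn : m ≤ n) (μ : Measure (Matrix (Fin n) (Fin n) ℝ)) (hμ : IsHaarO n μ)
    (u : Fin 2 → Fin n → ℝ) (hu : ∀ i j, u i ⬝ᵥ u j = if i = j then 1 else 0) :
    ∃ lam : Measure (Fin 2 × Fin m → ℝ), lam = μ.map (fun M => res (Fin.castLE hmn) (Um u M)) ∧
      IsProbabilityMeasure lam ∧ (∀ᵐ x ∂lam, ‖x‖ ≤ √(n:ℝ)) ∧ SteinId (n : ℝ) lam := by
  obtain ⟨hp, ho, hi⟩ := hμ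
  have hU := measurable_Um u
  have hr : Measurable (res (m := m) (Fin.castLE hmn)) := (res (Fin.castLE hmn)).continuous.measurable
  have hframe : ∀ᵐ v ∂(μ.map (Um u)), ∀ a b, ∑ j, v (a, j) * v (b, j) = if a = b then (n : ℝ) else 0 := by
    have hms : MeasurableSet {v : Fin 2 × Fin n → ℝ | ∀ a b, ∑ j, v (a, j) * v (b, j) = if a = b then (n : ℝ) else 0} := by
      simp only [Set.ofPred_forall]
      refine MeasurableSet.iInter fun a => MeasurableSet.iInter fun b => ?_
      exact measurableSet_eq_fun (by fun_prop) measurable_const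
    rw [ae_map_iff hU.aemeasurable hms]
    filter_upwards [ho] with M hM a b
    have h1 : ∑ j, Um u M (a, j) * Um u M (b, j) = n * ((M *ᵥ u a) ⬝ᵥ (M *ᵥ u b)) := by
      simp only [Um, dotProduct, Finset.mul_sum]
      refine Finset.sum_congr rfl fun j _ => ?_
      have := Real.mul_self_sqrt (Nat.cast_nonneg (α := ℝ) n)
      linear_combination ((M *ᵥ u a) j * (M *ᵥ u b) j) * this
    have h2 : (M *ᵥ u a) ⬝ᵥ (M *ᵥ u b) = u a ⬝ᵥ u b := by
      rw [Matrix.dotProduct_mulVec, ← Matrix.mulVec_transpose, Matrix.mulVec_mulVec, hM, Matrix.one_mulVec]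
    rw [h1, h2, hu]
    split_ifs <;> simp
  have hnorm : ∀ᵐ v ∂(μ.map (Um u)), ‖v‖ ≤ √(n:ℝ) := by
    filter_upwards [hframe] with v hv
    refine (pi_norm_le_iff_of_nonneg (by positivity)).2 fun p => ?_
    rw [Real.norm_eq_abs]
    refine Real.abs_le_sqrt ?_
    have := hv p.1 p.1
    rw [if_pos rfl] at this
    rw [← this, pow_two]
    exact Finset.single_le_sum (f := fun j => v (p.1, j) * v (p.1, j)) (fun j _ => mul_self_nonneg _) (Finset.mem_univ p.2)
  have hinv : ∀ r t : Fin n, r ≠ t → ∀ ε, (μ.map (Um u)).map (rotv r t ε) = μ.map (Um u) := by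
    intro r t hrt ε
    rw [Measure.map_map (continuous_rotv r t ε).measurable hU]
    have : rotv r t ε ∘ Um u = Um u ∘ (fun M => rotM r t ε * M) := by
      ext M p
      simp only [Function.comp_apply, rotv, Um]
      rw [← Matrix.mulVec_mulVec, rotM_mulVec]
      split_ifs <;> ring
    rw [this, ← Measure.map_map hU (measurable_mulLeft _), hi _ (rotM_orth r t hrt ε)]
  haveI : IsProbabilityMeasure (μ.map (Um u)) := Measure.isProbabilityMeasure_map hU.aemeasurable
  refine ⟨_, rfl, Measure.isProbabilityMeasure_map (hr.comp hU).aemeasurable, ?_, ?_⟩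
  · have e : μ.map (fun M => res (m := m) (Fin.castLE hmn) (Um u M)) = (μ.map (Um u)).map (res (Fin.castLE hmn)) :=
      (Measure.map_map hr hU).symm
    rw [e, ae_map_iff hr.aemeasurable (measurableSet_le measurable_norm measurable_const)]
    filter_upwards [hnorm] with v hv
    refine (pi_norm_le_iff_of_nonneg (by positivity)).2 fun p => ?_
    exact (norm_le_pi_norm v _).trans hv
  · intro p φ hφ
    have e : μ.map (fun M => res (m := m) (Fin.castLE hmn) (Um u M)) = (μ.map (Um u)).map (res (Fin.castLE hmn)) :=
      (Measure.map_map hr hU).symm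
    have h := stein_frame (Fin.castLE hmn) (Fin.castLE_injective hmn) (μ.map (Um u)) _ hnorm hframe hinv p φ hφ
    rw [e, integral_map hr.aemeasurable, integral_map hr.aemeasurable]
    · exact h
    · refine (continuous_finsetSum _ fun q _ => ?_).aestronglyMeasurable
      exact (continuous_const.sub (continuous_Tm p q)).mul (cont_dir φ hφ _)
    · exact ((continuous_apply p).mul hφ.continuous).aestronglyMeasurable

lemma linMap_lip {m : ℕ} (c s : ℝ) (hs : s ^ 2 = 1 - c ^ 2) (g : (Fin 2 × Fin m → ℝ) → ℝ)
    (hg : ∀ x y : Fin 2 × Fin m → ℝ, |g x - g y| ≤ Real.sqrt (∑ p, (x p - y p) ^ 2)) (x y : Fin 2 × Fin m → ℝ) :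
    |g (linMap c s x) - g (linMap c s y)| ≤ √2 * Real.sqrt (∑ p, (x p - y p) ^ 2) := by
  refine (hg _ _).trans ?_
  rw [← Real.sqrt_mul (by norm_num)]
  refine Real.sqrt_le_sqrt ?_
  simp only [Fintype.sum_prod_type, Fin.sum_univ_two, linMap, if_true, one_ne_zero, if_false]
  rw [mul_add, Finset.mul_sum, Finset.mul_sum, ← Finset.sum_add_distrib, ← Finset.sum_add_distrib]
  refine Finset.sum_le_sum fun i _ => ?_
  set a := x (0, i) - y (0, i)
  set b := x (1, i) - y (1, i)
  have : c * x (0, i) + s * x (1, i) - (c * y (0, i) + s * y (1, i)) = c * a + s * b := by simp only [a, b]; ring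
  rw [this]
  nlinarith [sq_nonneg (s * a - c * b), sq_nonneg b]

lemma core_abs {m : ℕ} (lam : Measure (Fin 2 × Fin m → ℝ)) [IsProbabilityMeasure lam]
    (N : ℝ) (hN : 1 < N) (hm : 0 < m) (R : ℝ) (hR : ∀ᵐ x ∂lam, ‖x‖ ≤ R) (hS : SteinId N lam)
    (g : (Fin 2 × Fin m → ℝ) → ℝ)
    (hL : ∀ x y, |g x - g y| ≤ √2 * Real.sqrt (∑ p, (x p - y p) ^ 2)) :
    |∫ x, g x ∂lam - ∫ z, g z ∂(Gam (Fin 2 × Fin m))| ≤ 4 * m / (N - 1) := by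
  have hgc : Continuous g := (lip_of_eucl g √2 (by positivity) hL).continuous
  have hbd : ∀ f : (Fin 2 × Fin m → ℝ) → ℝ, (∀ x y, |f x - f y| ≤ √2 * Real.sqrt (∑ p, (x p - y p) ^ 2)) →
      Integrable f (Gam (Fin 2 × Fin m)) := by
    intro f hf
    have hfc : Continuous f := (lip_of_eucl f √2 (by positivity) hf).continuous
    refine Integrable.mono' ((integrable_const |f 0|).add
      (integrable_gam_norm.const_mul (√2 * √(Fintype.card (Fin 2 × Fin m))))) hfc.aestronglyMeasurable
      (Filter.Eventually.of_forall fun y => ?_)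
    have h1 := hf y 0
    have h2 : √2 * √(∑ p, (y p - (0 : Fin 2 × Fin m → ℝ) p) ^ 2) ≤ √2 * √(Fintype.card (Fin 2 × Fin m)) * ‖y‖ := by
      rw [mul_assoc]
      refine mul_le_mul_of_nonneg_left ?_ (by positivity)
      simpa using sqrt_sum_le y
    have h3 := abs_sub_abs_le_abs_sub (f y) (f 0)
    simp only [Pi.add_apply, Real.norm_eq_abs]
    linarith
  refine le_of_forall_pos_le_add fun ε hε => ?_
  obtain ⟨F, hF2, hFL, hFg, C, hC⟩ := mollify g √2 (by positivity) hL (ε / 2) (by positivity)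
  have hFc := hF2.continuous
  have h1 := core_bound lam N hN hm R hR hS F hF2 hFL C hC
  have h2 := core_bound lam N hN hm R hR hS (fun x => - F x) hF2.neg (fun x y => by
      have := hFL x y
      rwa [show -F x - -F y = -(F x - F y) by ring, abs_neg]) C (fun p q x => by
      have e : (fun y => fderiv ℝ (fun x => - F x) y (Pi.single p 1)) = fun y => - (fderiv ℝ F y (Pi.single p 1)) := by
        ext y; rw [fderiv_fun_neg]; rfl
      rw [e, fderiv_fun_neg]
      simpa using hC p q x)
  simp only [integral_neg] at h2
  have hcl : ∀ (ρ : Measure (Fin 2 × Fin m → ℝ)) [IsProbabilityMeasure ρ], Integrable F ρ → Integrable g ρ →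
      |∫ x, F x ∂ρ - ∫ x, g x ∂ρ| ≤ ε / 2 := by
    intro ρ _ hF hg
    rw [← integral_sub hF hg, ← Real.norm_eq_abs]
    refine (norm_integral_le_of_norm_le_const (C := ε / 2) (Filter.Eventually.of_forall fun x => hFg x)).trans ?_
    simp
  have h3 := hcl lam (integrable_of_ae_ball lam R hR _ hFc) (integrable_of_ae_ball lam R hR _ hgc)
  have h4 := hcl (Gam (Fin 2 × Fin m)) (hbd F hFL) (hbd g hL)
  rw [abs_le] at h3 h4 ⊢
  constructor <;> linarith [h3.1, h3.2, h4.1, h4.2]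

/-- **Corollary.** For SUO-distributed `W`, inputs `z ≠ z'` with `‖z‖² = ‖z'‖² = k`,
`c = zᵀz'/k`, and `(y, y')` centered Gaussian with covariance `[[1,c],[c,1]] ⊗ I_m`,
if `n = max k m ≥ 2` then for every `1`-Lipschitz (Euclidean) `g : ℝ^{2m} → ℝ`,
`|E[g(Wz, Wz')] - E[g(y, y')]| ≤ 4m/(n-1)`. -/
theorem suo_mulVec_wasserstein (m k : ℕ) (hm : 0 < m) (hk : 0 < k)
    (hn : 2 ≤ max k m)
    (ν : Measure (Matrix (Fin m) (Fin k) ℝ)) (hν : IsSUO m k ν)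
    (z z' : Fin k → ℝ) (hz : z ⬝ᵥ z = (k : ℝ)) (hz' : z' ⬝ᵥ z' = (k : ℝ))
    (hne : z ≠ z') (c : ℝ) (hc : c = z ⬝ᵥ z' / (k : ℝ))
    (γ : Measure (Fin 2 × Fin m → ℝ))
    (hγ : IsGaussianLaw (!![1, c; c, 1] ⊗ₖ (1 : Matrix (Fin m) (Fin m) ℝ)) γ) :
    ∀ g : (Fin 2 × Fin m → ℝ) → ℝ,
      (∀ x y : Fin 2 × Fin m → ℝ, |g x - g y| ≤ Real.sqrt (∑ p, (x p - y p) ^ 2)) →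
      |(∫ W, g (fun p => W.mulVec (if p.1 = 0 then z else z') p.2) ∂ν) -
          ∫ y, g y ∂γ| ≤
        4 * (m : ℝ) / (((max k m : ℕ) : ℝ) - 1) := by
  obtain ⟨μ, hμ, rfl⟩ := hν
  intro g hg
  have hk' : (0:ℝ) < k := by exact_mod_cast hk
  have hmn : m ≤ max k m := le_max_right k m
  have hkn : k ≤ max k m := le_max_left k m
  obtain ⟨hc1, u, hu, hzu, hzu'⟩ := exists_frame hn (k : ℝ) c hk' (padv hkn z) (padv hkn z')
    (by rw [dot_padv_padv, hz]) (by rw [dot_padv_padv, hz']) (by rw [dot_padv_padv, hc]; field_simp)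
  have hs : √(1 - c ^ 2) ^ 2 = 1 - c ^ 2 := Real.sq_sqrt (by linarith)
  set s := √(1 - c ^ 2) with hsd
  obtain ⟨lam, hlam, hpr, hR, hS⟩ := lam_props hmn μ hμ u hu
  have hgc : Continuous g := (lip_of_eucl g 1 (by norm_num) (by simpa using hg)).continuous
  have hlc := continuous_linMap (m := m) c s
  have hN : (1:ℝ) < ((max k m : ℕ) : ℝ) := by exact_mod_cast hn
  have hmain := core_abs lam _ hN hm _ hR hS (fun x => g (linMap c s x)) (linMap_lip c s hs g hg)
  rw [gaussianLaw_eq c s hs γ hγ, integral_map hlc.measurable.aemeasurable hgc.aestronglyMeasurable]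
  have hmeas : Measurable (fun W : Matrix (Fin m) (Fin k) ℝ => fun p : Fin 2 × Fin m => W.mulVec (if p.1 = 0 then z else z') p.2) :=
    measurable_pi_iff.2 fun p => measurable_mulVec _ _
  have hUr : Measurable (fun M => res (m := m) (Fin.castLE hmn) (Um u M)) :=
    (res (Fin.castLE hmn)).continuous.measurable.comp (measurable_Um u)
  have hgm : Measurable (fun W : Matrix (Fin m) (Fin k) ℝ => g (fun p : Fin 2 × Fin m => W.mulVec (if p.1 = 0 then z else z') p.2)) :=
    hgc.measurable.comp hmeas
  have hgl : Continuous (fun x => g (linMap c s x)) := hgc.comp hlc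
  rw [integral_map (measurable_suo _ _).aemeasurable hgm.aestronglyMeasurable]
  rw [hlam, integral_map hUr.aemeasurable hgl.aestronglyMeasurable] at hmain
  have hnk : ∀ t : ℝ, √(((max k m : ℕ) : ℝ) / k) * (√(k:ℝ) * t) = √((max k m : ℕ) : ℝ) * t := by
    intro t
    rw [← mul_assoc, ← Real.sqrt_mul (by positivity), div_mul_cancel₀ _ hk'.ne']
  have hpt : ∀ M : Matrix (Fin (max k m)) (Fin (max k m)) ℝ,
      (fun p : Fin 2 × Fin m => (suoOfHaar (le_max_right k m) (le_max_left k m) M).mulVec (if p.1 = 0 then z else z') p.2)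
        = linMap c s (res (Fin.castLE hmn) (Um u M)) := by
    intro M
    ext p
    unfold suoOfHaar linMap
    rw [Matrix.smul_mulVec, Pi.smul_apply, submatrix_mulVec_padv, smul_eq_mul]
    by_cases hp : p.1 = 0
    · rw [if_pos hp, if_pos hp, hzu, Matrix.mulVec_smul, Pi.smul_apply, smul_eq_mul, hnk]
      rfl
    · rw [if_neg hp, if_neg hp, hzu', Matrix.mulVec_smul, Pi.smul_apply, smul_eq_mul, hnk, Matrix.mulVec_add,
        Matrix.mulVec_smul, Matrix.mulVec_smul]
      simp only [Pi.add_apply, Pi.smul_apply, smul_eq_mul, res_apply, Um]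
      ring
  simp only [hpt]
  exact hmain
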